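/- arXiv:1008.3931 — 4 statements merged into one kernel-verified Lean document; each statement's English description precedes it below -/
import Mathlib

section
/- Let G be a smooth function on a neighborhood of (0,0) in ℝ² with G(0,0) = 0 and ∇G(0,0) = (0,0), let M ≥ 1 and α = α_M(G), and suppose G_M(1,0) ≠ 0, ∂_y G_M(1,0) = 0 and ∂_y² G_M(1,0) = 0. Then: (i) for every η > 0 there exist μ, ν > 0 such that for all (x,y) with 0 < x < μ and |y| < ν x^M one has |∂_y G(x,y)| < η x^{α−M}, |∂_y² G(x,y)| < η x^{α−2M} and |∂_x ∂_y G(x,y)| < η x^{α−M−1}; and (ii) there exist c₁, μ, ν > 0 such that for all (x,y) with 0 < x < μ and |y| < ν x^M one has |∂_x G(x,y)| ≥ c₁ x^{α−1} and |∂_x² G(x,y)| ≥ c₁ x^{α−2}. -/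
open MeasureTheory Set Filter Topology

noncomputable section

/-- Iterated partial derivative `∂ₓᵃ ∂ᵧᵇ R` at `(x, y)`. -/
def pderiv2 (R : ℝ → ℝ → ℝ) (a b : ℕ) (x y : ℝ) : ℝ :=
  iteratedDeriv a (fun x' => iteratedDeriv b (fun y' => R x' y') y) x

/-- Taylor coefficient `R_{ab} = ∂ₓᵃ ∂ᵧᵇ R(0,0) / (a! b!)`. -/
def tcoeff (R : ℝ → ℝ → ℝ) (a b : ℕ) : ℝ :=
  pderiv2 R a b 0 0 / (Nat.factorial a * Nat.factorial b)

/-- The support of the Taylor series of `R` at the origin. -/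
def tsupp (R : ℝ → ℝ → ℝ) : Set (ℕ × ℕ) := {p | tcoeff R p.1 p.2 ≠ 0}

/-- The Newton polygon of `R`. -/
def newtonPolygon (R : ℝ → ℝ → ℝ) : Set (ℝ × ℝ) :=
  convexHull ℝ (⋃ p ∈ tsupp R, {q : ℝ × ℝ | (p.1 : ℝ) ≤ q.1 ∧ (p.2 : ℝ) ≤ q.2})

/-- The Newton distance of `R`. -/
def newtonDist (R : ℝ → ℝ → ℝ) : ℝ := sInf {t : ℝ | (t, t) ∈ newtonPolygon R}

/-- `e` is a compact edge of `N(R)` of slope `-1/M` (with `M > 0`): it is the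
(one-dimensional, compact) face of the Newton polygon cut out by a supporting line
`t₁ + M t₂ = c`. -/
def IsCompactEdge (R : ℝ → ℝ → ℝ) (M : ℝ) (e : Set (ℝ × ℝ)) : Prop :=
  0 < M ∧ ∃ c : ℝ, (∀ q ∈ newtonPolygon R, c ≤ q.1 + M * q.2) ∧
    e = {q ∈ newtonPolygon R | q.1 + M * q.2 = c} ∧
    ∃ v w : ℝ × ℝ, v ≠ w ∧ e = segment ℝ v w

/-- The edge polynomial `R_e(x,y) = Σ_{(a,b) ∈ e ∩ supp R} R_{ab} x^a y^b`. -/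
def edgePoly (R : ℝ → ℝ → ℝ) (e : Set (ℝ × ℝ)) (x y : ℝ) : ℝ :=
  ∑' p : ℕ × ℕ,
    Set.indicator {p : ℕ × ℕ | ((p.1 : ℝ), (p.2 : ℝ)) ∈ e}
      (fun p => tcoeff R p.1 p.2 * x ^ p.1 * y ^ p.2) p

/-- `p` has a zero of order exactly `m` at `y₀`. -/
def ZeroOfOrder (p : ℝ → ℝ) (m : ℕ) (y₀ : ℝ) : Prop :=
  (∀ j < m, iteratedDeriv j p y₀ = 0) ∧ iteratedDeriv m p y₀ ≠ 0

/-- `R` is in nonadapted coordinates: the bisectrix meets the interior of a compact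
edge `e` such that `R_e(1, ⬝)` has a real zero of order greater than `d(R)`. -/
def IsNonadapted (R : ℝ → ℝ → ℝ) : Prop :=
  ∃ (M : ℝ) (e : Set (ℝ × ℝ)) (v w : ℝ × ℝ), IsCompactEdge R M e ∧ v ≠ w ∧
    e = segment ℝ v w ∧ (∃ t : ℝ, (t, t) ∈ openSegment ℝ v w) ∧
    ∃ (y₀ : ℝ) (m : ℕ), newtonDist R < (m : ℝ) ∧
      ZeroOfOrder (fun y => edgePoly R e 1 y) m y₀

/-- `R` is in generic adapted coordinates: adapted coordinates, every compact edge has slope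
at least `-1`, and the Newton polygon meets the `t₂`-axis. -/
def GenericAdapted (R : ℝ → ℝ → ℝ) : Prop :=
  ¬ IsNonadapted R ∧ (∀ M e, IsCompactEdge R M e → 1 ≤ M) ∧
    ∃ t : ℝ, ((0 : ℝ), t) ∈ newtonPolygon R

/-- `α_M(R) = min {a + M b : (a,b) ∈ supp R}`. -/
def alphaM (R : ℝ → ℝ → ℝ) (M : ℝ) : ℝ :=
  sInf {t : ℝ | ∃ p ∈ tsupp R, t = (p.1 : ℝ) + M * p.2}

/-- `R_M`, the sum of the terms of the Taylor series of `R` of minimal `M`-weighted degree. -/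
def RMpart (R : ℝ → ℝ → ℝ) (M : ℝ) (x y : ℝ) : ℝ :=
  ∑' p : ℕ × ℕ,
    Set.indicator {p : ℕ × ℕ | p ∈ tsupp R ∧ (p.1 : ℝ) + M * p.2 = alphaM R M}
      (fun p => tcoeff R p.1 p.2 * x ^ p.1 * y ^ p.2) p

/-- The Hessian determinant of `f`. -/
def hessDet (f : ℝ → ℝ → ℝ) (x y : ℝ) : ℝ :=
  pderiv2 f 2 0 x y * pderiv2 f 0 2 x y - (pderiv2 f 1 1 x y) ^ 2

/-- `F*(x,y) = (Σ_{(a,b) vertex of N(F)} x^{2a} y^{2b})^{1/2}`. -/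
def vertexFn (F : ℝ → ℝ → ℝ) (x y : ℝ) : ℝ :=
  Real.sqrt (∑' p : ℕ × ℕ,
    Set.indicator
      {p : ℕ × ℕ | ((p.1 : ℝ), (p.2 : ℝ)) ∈ (newtonPolygon F).extremePoints ℝ}
      (fun p => x ^ (2 * p.1) * y ^ (2 * p.2)) p)

open scoped ContDiff

section PartialDerivatives

variable {F : ℝ → ℝ → ℝ} {U : Set (ℝ × ℝ)} {x y : ℝ}

theorem hasDerivAt_fst_of_differentiableAt
    (h : DifferentiableAt ℝ (fun p : ℝ × ℝ => F p.1 p.2) (x, y)) :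
    HasDerivAt (fun x' => F x' y) (fderiv ℝ (fun p : ℝ × ℝ => F p.1 p.2) (x, y) (1, 0)) x :=
  h.hasFDerivAt.comp_hasDerivAt (f := fun t => (t, y)) x
    ((hasDerivAt_id x).prodMk (hasDerivAt_const x y))

theorem hasDerivAt_snd_of_differentiableAt
    (h : DifferentiableAt ℝ (fun p : ℝ × ℝ => F p.1 p.2) (x, y)) :
    HasDerivAt (fun y' => F x y') (fderiv ℝ (fun p : ℝ × ℝ => F p.1 p.2) (x, y) (0, 1)) y :=
  h.hasFDerivAt.comp_hasDerivAt (f := fun t => (x, t)) y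
    ((hasDerivAt_const y x).prodMk (hasDerivAt_id y))

theorem differentiableAt_of_contDiffOn_isOpen (hU : IsOpen U)
    (h : ContDiffOn ℝ ∞ (fun p : ℝ × ℝ => F p.1 p.2) U) (hp : (x, y) ∈ U) :
    DifferentiableAt ℝ (fun p : ℝ × ℝ => F p.1 p.2) (x, y) :=
  (h.contDiffAt (hU.mem_nhds hp)).differentiableAt (by simp)

theorem contDiffOn_fderiv_apply (hU : IsOpen U)
    (h : ContDiffOn ℝ ∞ (fun p : ℝ × ℝ => F p.1 p.2) U) (v : ℝ × ℝ) :
    ContDiffOn ℝ ∞ (fun p : ℝ × ℝ => fderiv ℝ (fun p : ℝ × ℝ => F p.1 p.2) p v) U :=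
  (h.fderiv_of_isOpen hU (by simp)).clm_apply contDiffOn_const

theorem contDiffOn_deriv_fst (hU : IsOpen U)
    (h : ContDiffOn ℝ ∞ (fun p : ℝ × ℝ => F p.1 p.2) U) :
    ContDiffOn ℝ ∞ (fun p : ℝ × ℝ => deriv (fun x' => F x' p.2) p.1) U :=
  (contDiffOn_fderiv_apply hU h (1, 0)).congr fun p hp =>
    (hasDerivAt_fst_of_differentiableAt
      (differentiableAt_of_contDiffOn_isOpen (x := p.1) (y := p.2) hU h hp)).deriv

theorem contDiffOn_deriv_snd (hU : IsOpen U)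
    (h : ContDiffOn ℝ ∞ (fun p : ℝ × ℝ => F p.1 p.2) U) :
    ContDiffOn ℝ ∞ (fun p : ℝ × ℝ => deriv (fun y' => F p.1 y') p.2) U :=
  (contDiffOn_fderiv_apply hU h (0, 1)).congr fun p hp =>
    (hasDerivAt_snd_of_differentiableAt
      (differentiableAt_of_contDiffOn_isOpen (x := p.1) (y := p.2) hU h hp)).deriv

theorem eventually_mem_fst (hU : IsOpen U) (hp : (x, y) ∈ U) : ∀ᶠ t in 𝓝 x, (t, y) ∈ U :=
  ContinuousAt.eventually_mem (by fun_prop) (hU.mem_nhds hp)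

theorem eventually_mem_snd (hU : IsOpen U) (hp : (x, y) ∈ U) : ∀ᶠ t in 𝓝 y, (x, t) ∈ U :=
  ContinuousAt.eventually_mem (by fun_prop) (hU.mem_nhds hp)

/-- Mixed partial derivatives of a smooth function commute. -/
theorem deriv_snd_deriv_fst_comm (hU : IsOpen U)
    (h : ContDiffOn ℝ ∞ (fun p : ℝ × ℝ => F p.1 p.2) U) (hp : (x, y) ∈ U) :
    deriv (fun y' => deriv (fun x' => F x' y') x) y =
      deriv (fun x' => deriv (fun y' => F x' y') y) x := by
  set f : ℝ × ℝ → ℝ := fun p => F p.1 p.2 with hf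
  have hsymm : IsSymmSndFDerivAt ℝ f (x, y) :=
    (h.contDiffAt (hU.mem_nhds hp)).isSymmSndFDerivAt
      (by rw [minSmoothness_of_isRCLikeNormedField]; exact WithTop.coe_le_coe.2 le_top)
  have hd : DifferentiableAt ℝ (fderiv ℝ f) (x, y) :=
    ((h.fderiv_of_isOpen (m := ∞) hU (by simp)).contDiffAt (hU.mem_nhds hp)).differentiableAt
      (by simp)
  have e1 : (fun y' => deriv (fun x' => F x' y') x) =ᶠ[𝓝 y] fun y' => fderiv ℝ f (x, y') (1, 0) :=
    (eventually_mem_snd hU hp).mono fun t ht => (hasDerivAt_fst_of_differentiableAt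
      (differentiableAt_of_contDiffOn_isOpen hU h ht)).deriv
  have e2 : (fun x' => deriv (fun y' => F x' y') y) =ᶠ[𝓝 x] fun x' => fderiv ℝ f (x', y) (0, 1) :=
    (eventually_mem_fst hU hp).mono fun t ht => (hasDerivAt_snd_of_differentiableAt
      (differentiableAt_of_contDiffOn_isOpen hU h ht)).deriv
  have d1 : HasDerivAt (fun y' => fderiv ℝ f (x, y')) (fderiv ℝ (fderiv ℝ f) (x, y) (0, 1)) y :=
    hd.hasFDerivAt.comp_hasDerivAt (f := fun t => (x, t)) y
      ((hasDerivAt_const y x).prodMk (hasDerivAt_id y))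
  have d2 : HasDerivAt (fun x' => fderiv ℝ f (x', y)) (fderiv ℝ (fderiv ℝ f) (x, y) (1, 0)) x :=
    hd.hasFDerivAt.comp_hasDerivAt (f := fun t => (t, y)) x
      ((hasDerivAt_id x).prodMk (hasDerivAt_const x y))
  rw [e1.deriv_eq, e2.deriv_eq]
  have d1' := (d1.clm_apply (hasDerivAt_const y ((1 : ℝ), (0 : ℝ)))).deriv
  have d2' := (d2.clm_apply (hasDerivAt_const x ((0 : ℝ), (1 : ℝ)))).deriv
  rw [d1', d2']
  simpa using hsymm.eq (0, 1) (1, 0)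

theorem pderiv2_succ_fst (G : ℝ → ℝ → ℝ) (i j : ℕ) (x y : ℝ) :
    pderiv2 G (i + 1) j x y = deriv (fun x' => pderiv2 G i j x' y) x := by
  simp only [pderiv2, iteratedDeriv_succ]

theorem pderiv2_zero_succ (G : ℝ → ℝ → ℝ) (j : ℕ) (x y : ℝ) :
    pderiv2 G 0 (j + 1) x y = deriv (fun y' => pderiv2 G 0 j x y') y := by
  simp only [pderiv2, iteratedDeriv_zero, iteratedDeriv_succ]

theorem iteratedDeriv_pderiv2 (G : ℝ → ℝ → ℝ) (i j a : ℕ) (x y : ℝ) :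
    iteratedDeriv a (fun x' => pderiv2 G i j x' y) x = pderiv2 G (a + i) j x y := by
  simp only [pderiv2, iteratedDeriv_eq_iterate, Function.iterate_add_apply]

theorem contDiffOn_pderiv2 (hU : IsOpen U)
    (h : ContDiffOn ℝ ∞ (fun p : ℝ × ℝ => F p.1 p.2) U) (i j : ℕ) :
    ContDiffOn ℝ ∞ (fun p : ℝ × ℝ => pderiv2 F i j p.1 p.2) U := by
  induction i with
  | zero =>
    induction j with
    | zero => simpa [pderiv2] using h
    | succ j ih => simpa only [pderiv2_zero_succ] using contDiffOn_deriv_snd hU ih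
  | succ i ih => simpa only [pderiv2_succ_fst] using contDiffOn_deriv_fst hU ih

theorem deriv_snd_pderiv2 (hU : IsOpen U)
    (h : ContDiffOn ℝ ∞ (fun p : ℝ × ℝ => F p.1 p.2) U) (i j : ℕ) (hp : (x, y) ∈ U) :
    deriv (fun y' => pderiv2 F i j x y') y = pderiv2 F i (j + 1) x y := by
  induction i generalizing x with
  | zero => exact (pderiv2_zero_succ F j x y).symm
  | succ i ih =>
    simp only [pderiv2_succ_fst]
    rw [deriv_snd_deriv_fst_comm hU (contDiffOn_pderiv2 hU h i j) hp]
    exact Filter.EventuallyEq.deriv_eq ((eventually_mem_fst hU hp).mono fun t ht => ih ht)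

theorem hasDerivAt_snd_pderiv2 (hU : IsOpen U)
    (h : ContDiffOn ℝ ∞ (fun p : ℝ × ℝ => F p.1 p.2) U) (i j : ℕ) (hp : (x, y) ∈ U) :
    HasDerivAt (fun y' => pderiv2 F i j x y') (pderiv2 F i (j + 1) x y) y := by
  rw [← deriv_snd_pderiv2 hU h i j hp]
  exact (hasDerivAt_snd_of_differentiableAt (differentiableAt_of_contDiffOn_isOpen hU
    (contDiffOn_pderiv2 hU h i j) hp)).differentiableAt.hasDerivAt

end PartialDerivatives

/-- Leading term of a smooth function of one variable at a zero of order at least `m`. -/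
theorem exists_abs_sub_leading_le {f : ℝ → ℝ} {r : ℝ} (hr : 0 < r)
    (hf : ContDiffOn ℝ ∞ f (Ioo (-r) r)) (m : ℕ) (hm : ∀ a < m, iteratedDeriv a f 0 = 0)
    {ε : ℝ} (hε : 0 < ε) :
    ∃ μ > 0, ∀ x, 0 < x → x < μ →
      |f x - iteratedDeriv m f 0 / (Nat.factorial m) * x ^ m| ≤ ε * x ^ m := by
  have h0 : (0 : ℝ) ∈ Ioo (-r) r := by simp [hr]
  have hlit := taylor_isLittleO (n := m) (convex_Ioo (-r) r) h0 (hf.of_le (by exact_mod_cast le_top))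
  have hev := hlit.def hε
  rw [isOpen_Ioo.nhdsWithin_eq h0, Metric.eventually_nhds_iff] at hev
  obtain ⟨μ, hμ, H⟩ := hev
  refine ⟨μ, hμ, fun x hx hxμ => ?_⟩
  have hH := H (y := x) (by simpa [abs_of_pos hx] using hxμ)
  have hiter : ∀ k, iteratedDerivWithin k f (Ioo (-r) r) 0 = iteratedDeriv k f 0 := fun k =>
    iteratedDerivWithin_eq_iteratedDeriv isOpen_Ioo.uniqueDiffOn
      ((hf.contDiffAt (isOpen_Ioo.mem_nhds h0)).of_le (by exact_mod_cast le_top)) h0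
  rw [taylor_within_apply, Finset.sum_range_succ, Finset.sum_eq_zero] at hH
  · simp only [hiter, sub_zero, zero_add, Real.norm_eq_abs, abs_pow, abs_of_pos hx,
      smul_eq_mul] at hH
    convert hH using 3
    ring
  · intro k hk
    rw [hiter, hm k (Finset.mem_range.1 hk), smul_zero]

section SliverEstimates

variable {G : ℝ → ℝ → ℝ} {r : ℝ}

theorem contDiffOn_pderiv2_axis (hr : 0 < r)
    (hG : ContDiffOn ℝ ∞ (fun p : ℝ × ℝ => G p.1 p.2) (Ioo (-r) r ×ˢ Ioo (-r) r)) (i j : ℕ) :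
    ContDiffOn ℝ ∞ (fun x => pderiv2 G i j x 0) (Ioo (-r) r) :=
  (contDiffOn_pderiv2 (isOpen_Ioo.prod isOpen_Ioo) hG i j).comp (f := fun x : ℝ => (x, (0 : ℝ)))
    (by fun_prop) fun x hx => ⟨hx, by simp [hr]⟩

theorem exists_abs_pderiv2_axis_le (hr : 0 < r)
    (hG : ContDiffOn ℝ ∞ (fun p : ℝ × ℝ => G p.1 p.2) (Ioo (-r) r ×ˢ Ioo (-r) r))
    (i j : ℕ) (γ : ℝ) (hγ : ∀ a : ℕ, pderiv2 G (a + i) j 0 0 ≠ 0 → γ ≤ a) :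
    ∃ C > 0, ∃ μ > 0, ∀ x, 0 < x → x < μ → |pderiv2 G i j x 0| ≤ C * x ^ γ := by
  set f : ℝ → ℝ := fun x => pderiv2 G i j x 0 with hf
  obtain ⟨μ, hμ, H⟩ := exists_abs_sub_leading_le hr (contDiffOn_pderiv2_axis hr hG i j) ⌈γ⌉₊
    (fun a ha => by
      rw [iteratedDeriv_pderiv2]
      by_contra hne
      exact absurd (Nat.lt_ceil.1 ha) (not_lt.2 (hγ a hne))) one_pos
  set c := iteratedDeriv ⌈γ⌉₊ f 0 / (Nat.factorial ⌈γ⌉₊)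
  refine ⟨|c| + 1, by positivity, min μ 1, by positivity, fun x hx hxμ => ?_⟩
  have hx1 : x ≤ 1 := (hxμ.trans_le (min_le_right _ _)).le
  have h1 := H x hx (hxμ.trans_le (min_le_left _ _))
  have h2 : x ^ ⌈γ⌉₊ ≤ x ^ γ := by
    rw [← Real.rpow_natCast]
    exact Real.rpow_le_rpow_of_exponent_ge hx hx1 (Nat.le_ceil γ)
  have h3 : |f x| ≤ |f x - c * x ^ ⌈γ⌉₊| + |c| * x ^ ⌈γ⌉₊ := by
    have := abs_add_le (f x - c * x ^ ⌈γ⌉₊) (c * x ^ ⌈γ⌉₊)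
    rwa [sub_add_cancel, abs_mul c, abs_of_pos (pow_pos hx _)] at this
  calc |f x| ≤ (|c| + 1) * x ^ ⌈γ⌉₊ := by linarith
    _ ≤ (|c| + 1) * x ^ γ := by gcongr

theorem exists_abs_pderiv2_axis_le_small (hr : 0 < r)
    (hG : ContDiffOn ℝ ∞ (fun p : ℝ × ℝ => G p.1 p.2) (Ioo (-r) r ×ˢ Ioo (-r) r))
    (i j : ℕ) (γ : ℝ) (hγ : ∀ a : ℕ, pderiv2 G (a + i) j 0 0 ≠ 0 → γ < a)
    {η : ℝ} (hη : 0 < η) :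
    ∃ μ > 0, ∀ x, 0 < x → x < μ → |pderiv2 G i j x 0| ≤ η * x ^ γ := by
  set m : ℕ := ⌊γ + 1⌋₊
  have hm : γ < m := by linarith [Nat.lt_floor_add_one (γ + 1)]
  obtain ⟨C, hC, μ, hμ, H⟩ := exists_abs_pderiv2_axis_le hr hG i j m (fun a ha => by
    by_contra! hlt
    have : a + 1 ≤ m := by exact_mod_cast hlt
    rw [Nat.le_floor_iff' (by omega)] at this
    push_cast at this
    linarith [hγ a ha])
  have ht : Tendsto (fun x : ℝ => C * x ^ (m - γ)) (𝓝 0) (𝓝 0) := by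
    have := (Real.continuousAt_rpow_const 0 (m - γ) (Or.inr (by linarith))).tendsto.const_mul C
    simpa [Real.zero_rpow (sub_pos.2 hm).ne'] using this
  obtain ⟨μ', hμ', H'⟩ := Metric.eventually_nhds_iff.1 (ht.eventually_le_const hη)
  refine ⟨min μ μ', by positivity, fun x hx hxμ => ?_⟩
  have h1 := H x hx (hxμ.trans_le (min_le_left _ _))
  have h2 := H' (y := x) (by simpa [abs_of_pos hx] using hxμ.trans_le (min_le_right _ _))
  calc |pderiv2 G i j x 0| ≤ C * x ^ (m : ℝ) := h1
    _ = C * x ^ (m - γ) * x ^ γ := by rw [mul_assoc, ← Real.rpow_add hx]; ring_nf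
    _ ≤ η * x ^ γ := by gcongr

/-- A bound on `∂ₓⁱ ∂ᵧʲ⁺¹ G` over the sliver controls the oscillation of `∂ₓⁱ ∂ᵧʲ G` in `y`. -/
theorem abs_pderiv2_sub_axis_le
    (hG : ContDiffOn ℝ ∞ (fun p : ℝ × ℝ => G p.1 p.2) (Ioo (-r) r ×ˢ Ioo (-r) r))
    (i j : ℕ) {x y B : ℝ} (hx : x ∈ Ioo (-r) r) (hy : |y| < r)
    (hB : ∀ t, |t| ≤ |y| → |pderiv2 G i (j + 1) x t| ≤ B) :
    |pderiv2 G i j x y - pderiv2 G i j x 0| ≤ B * |y| := by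
  have key := (convex_Icc (-|y|) |y|).norm_image_sub_le_of_norm_hasDerivWithin_le
    (f := fun t => pderiv2 G i j x t) (f' := fun t => pderiv2 G i (j + 1) x t) (C := B)
    (x := 0) (y := y)
    (fun t ht => (hasDerivAt_snd_pderiv2 (isOpen_Ioo.prod isOpen_Ioo) hG i j
      ⟨hx, by constructor <;> linarith [ht.1, ht.2]⟩).hasDerivWithinAt)
    (fun t ht => hB t (abs_le.2 ht)) ⟨by simp, by simp⟩ ⟨neg_abs_le y, le_abs_self y⟩
  simpa using key

theorem exists_abs_pderiv2_le (hr : 0 < r)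
    (hG : ContDiffOn ℝ ∞ (fun p : ℝ × ℝ => G p.1 p.2) (Ioo (-r) r ×ˢ Ioo (-r) r))
    {M : ℝ} (hM : 1 ≤ M) {α : ℝ} (hα : ∀ a b : ℕ, pderiv2 G a b 0 0 ≠ 0 → α ≤ a + M * b)
    (i j : ℕ) :
    ∃ C > 0, ∃ μ > 0, ∀ x y, 0 < x → x < μ → |y| ≤ x ^ M →
      |pderiv2 G i j x y| ≤ C * x ^ (α - i - M * j) := by
  obtain ⟨k, hk⟩ := exists_nat_ge (α - i - M * j)
  induction k generalizing j with
  | zero =>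
    have h0 : ((0 : ℝ), (0 : ℝ)) ∈ Ioo (-r) r ×ˢ Ioo (-r) r := by simp [hr]
    have hcont : ContinuousAt (fun p : ℝ × ℝ => pderiv2 G i j p.1 p.2) (0, 0) :=
      (contDiffOn_pderiv2 (isOpen_Ioo.prod isOpen_Ioo) hG i j).continuousOn.continuousAt
        ((isOpen_Ioo.prod isOpen_Ioo).mem_nhds h0)
    obtain ⟨μ, hμ, H⟩ := Metric.eventually_nhds_iff.1 (hcont.abs.eventually_lt_const
      (lt_add_one |pderiv2 G i j 0 0|))
    refine ⟨|pderiv2 G i j 0 0| + 1, by positivity, min μ 1, by positivity,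
      fun x y hx hxμ hy => ?_⟩
    have hx1 : x ≤ 1 := (hxμ.trans_le (min_le_right _ _)).le
    have hyx : |y| ≤ x := hy.trans (by
      simpa using Real.rpow_le_rpow_of_exponent_ge hx hx1 hM)
    have hxm := hxμ.trans_le (min_le_left _ _)
    have h1 := H (y := (x, y)) (by
      simpa [Prod.dist_eq, abs_of_pos hx] using ⟨hxm, hyx.trans_lt hxm⟩)
    have h2 : 1 ≤ x ^ (α - i - M * j) :=
      Real.one_le_rpow_of_pos_of_le_one_of_nonpos hx hx1 (by simpa using hk)
    exact h1.le.trans (le_mul_of_one_le_right (by positivity) h2)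
  | succ k ih =>
    obtain ⟨C, hC, μ, hμ, H⟩ := ih (j + 1) (by push_cast at hk ⊢; linarith)
    obtain ⟨C', hC', μ', hμ', H'⟩ := exists_abs_pderiv2_axis_le hr hG i j (α - i - M * j)
      (fun a ha => by have := hα _ _ ha; push_cast at this; linarith)
    refine ⟨C + C', by positivity, min (min μ μ') (min 1 r), by positivity,
      fun x y hx hxμ hy => ?_⟩
    simp only [lt_min_iff] at hxμ
    obtain ⟨⟨hx1, hx2⟩, hx3, hx4⟩ := hxμ
    have hyx : |y| ≤ x := hy.trans (by
      simpa using Real.rpow_le_rpow_of_exponent_ge hx hx3.le hM)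
    have h1 := abs_pderiv2_sub_axis_le hG i j (x := x) (y := y) ⟨by linarith, hx4⟩
      (hyx.trans_lt hx4) (fun t ht => H x t hx hx1 (ht.trans hy))
    have h2 : C * x ^ (α - i - M * (j + 1 : ℕ)) * |y| ≤ C * x ^ (α - i - M * j) := by
      calc C * x ^ (α - i - M * (j + 1 : ℕ)) * |y|
          ≤ C * x ^ (α - i - M * (j + 1 : ℕ)) * x ^ M := by gcongr
        _ = C * x ^ (α - i - M * j) := by
          rw [mul_assoc, ← Real.rpow_add hx]; push_cast; ring_nf
    have h3 := H' x hx hx2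
    have h4 := abs_add_le (pderiv2 G i j x y - pderiv2 G i j x 0) (pderiv2 G i j x 0)
    rw [sub_add_cancel] at h4
    linarith

theorem exists_abs_pderiv2_sub_axis_le (hr : 0 < r)
    (hG : ContDiffOn ℝ ∞ (fun p : ℝ × ℝ => G p.1 p.2) (Ioo (-r) r ×ˢ Ioo (-r) r))
    {M : ℝ} (hM : 1 ≤ M) {α : ℝ} (hα : ∀ a b : ℕ, pderiv2 G a b 0 0 ≠ 0 → α ≤ a + M * b)
    (i j : ℕ) {η : ℝ} (hη : 0 < η) :
    ∃ μ > 0, ∃ ν > 0, ∀ x y, 0 < x → x < μ → |y| < ν * x ^ M →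
      |pderiv2 G i j x y - pderiv2 G i j x 0| ≤ η * x ^ (α - i - M * j) := by
  obtain ⟨C, hC, μ, hμ, H⟩ := exists_abs_pderiv2_le hr hG hM hα i (j + 1)
  refine ⟨min μ (min 1 r), by positivity, min 1 (η / C), by positivity,
    fun x y hx hxμ hy => ?_⟩
  simp only [lt_min_iff] at hxμ
  obtain ⟨hx1, hx2, hx3⟩ := hxμ
  have hxM : 0 < x ^ M := Real.rpow_pos_of_pos hx M
  have hy1 : |y| ≤ x ^ M := hy.le.trans (mul_le_of_le_one_left hxM.le (min_le_left _ _))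
  have hy2 : |y| ≤ η / C * x ^ M := hy.le.trans (by gcongr; exact min_le_right _ _)
  have hyx : |y| ≤ x := hy1.trans (by
    simpa using Real.rpow_le_rpow_of_exponent_ge hx hx2.le hM)
  have h1 := abs_pderiv2_sub_axis_le hG i j (x := x) (y := y) ⟨by linarith, hx3⟩
    (hyx.trans_lt hx3) (fun t ht => H x t hx hx1 (ht.trans hy1))
  calc _ ≤ _ := h1
    _ ≤ C * x ^ (α - i - M * (j + 1 : ℕ)) * (η / C * x ^ M) := by gcongr
    _ = η * (x ^ (α - i - M * (j + 1 : ℕ)) * x ^ M) := by field_simp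
    _ = η * x ^ (α - i - M * j) := by
      rw [← Real.rpow_add hx]; push_cast; ring_nf

theorem exists_abs_pderiv2_lt_small (hr : 0 < r)
    (hG : ContDiffOn ℝ ∞ (fun p : ℝ × ℝ => G p.1 p.2) (Ioo (-r) r ×ˢ Ioo (-r) r))
    {M : ℝ} (hM : 1 ≤ M) {α : ℝ} (hα : ∀ a b : ℕ, pderiv2 G a b 0 0 ≠ 0 → α ≤ a + M * b)
    (i j : ℕ) (hj : ∀ a : ℕ, pderiv2 G a j 0 0 ≠ 0 → α < a + M * j) {η : ℝ} (hη : 0 < η) :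
    ∃ μ > 0, ∃ ν > 0, ∀ x y, 0 < x → x < μ → |y| < ν * x ^ M →
      |pderiv2 G i j x y| < η * x ^ (α - i - M * j) := by
  obtain ⟨μ, hμ, ν, hν, H⟩ :=
    exists_abs_pderiv2_sub_axis_le hr hG hM hα i j (η := η / 3) (by positivity)
  obtain ⟨μ', hμ', H'⟩ := exists_abs_pderiv2_axis_le_small hr hG i j (α - i - M * j)
    (fun a ha => by have := hj _ ha; push_cast at this; linarith) (η := η / 3) (by positivity)
  refine ⟨min μ μ', by positivity, ν, hν, fun x y hx hxμ hy => ?_⟩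
  have h1 := H x y hx (hxμ.trans_le (min_le_left _ _)) hy
  have h2 := H' x hx (hxμ.trans_le (min_le_right _ _))
  have h3 := abs_add_le (pderiv2 G i j x y - pderiv2 G i j x 0) (pderiv2 G i j x 0)
  rw [sub_add_cancel] at h3
  have h4 : 0 < η * x ^ (α - i - M * j) := mul_pos hη (Real.rpow_pos_of_pos hx _)
  linarith

theorem exists_le_abs_pderiv2_fst (hr : 0 < r)
    (hG : ContDiffOn ℝ ∞ (fun p : ℝ × ℝ => G p.1 p.2) (Ioo (-r) r ×ˢ Ioo (-r) r))
    {M : ℝ} (hM : 1 ≤ M) {n : ℕ}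
    (hn : ∀ a b : ℕ, pderiv2 G a b 0 0 ≠ 0 → (n : ℝ) ≤ a + M * b)
    (hn0 : pderiv2 G n 0 0 0 ≠ 0) {i : ℕ} (hi : i ≤ n) :
    ∃ c > 0, ∃ μ > 0, ∃ ν > 0, ∀ x y, 0 < x → x < μ → |y| < ν * x ^ M →
      c * x ^ ((n : ℝ) - i) ≤ |pderiv2 G i 0 x y| := by
  set c := pderiv2 G n 0 0 0 / (Nat.factorial (n - i)) with hc
  have hc0 : 0 < |c| := abs_pos.2 (div_ne_zero hn0 (by positivity))
  obtain ⟨μ, hμ, ν, hν, H⟩ :=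
    exists_abs_pderiv2_sub_axis_le hr hG hM hn i 0 (η := |c| / 3) (by positivity)
  obtain ⟨μ', hμ', H'⟩ := exists_abs_sub_leading_le hr (contDiffOn_pderiv2_axis hr hG i 0) (n - i)
    (fun a ha => by
      rw [iteratedDeriv_pderiv2]
      by_contra hne
      have := hn _ _ hne
      simp only [Nat.cast_zero, mul_zero, add_zero, Nat.cast_le] at this
      omega) (ε := |c| / 3) (by positivity)
  refine ⟨|c| / 3, by positivity, min μ μ', by positivity, ν, hν, fun x y hx hxμ hy => ?_⟩
  have h1 := H x y hx (hxμ.trans_le (min_le_left _ _)) hy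
  have h2 := H' x hx (hxμ.trans_le (min_le_right _ _))
  have hpow : x ^ (n - i) = x ^ ((n : ℝ) - i) := by
    rw [← Nat.cast_sub hi, Real.rpow_natCast]
  rw [iteratedDeriv_pderiv2, Nat.sub_add_cancel hi, ← hc, hpow] at h2
  simp only [Nat.cast_zero, mul_zero, sub_zero] at h1
  set w := x ^ ((n : ℝ) - i)
  have hw : 0 < w := Real.rpow_pos_of_pos hx _
  have h3 : |c * w| = |c| * w := by rw [abs_mul, abs_of_pos hw]
  have h4 := abs_sub_abs_le_abs_sub (c * w) (pderiv2 G i 0 x y)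
  have h5 := abs_sub_le (pderiv2 G i 0 x y) (pderiv2 G i 0 x 0) (c * w)
  rw [abs_sub_comm (c * w)] at h4
  linarith

end SliverEstimates

section PrincipalPart

open Polynomial

variable {G : ℝ → ℝ → ℝ} {M : ℝ}

theorem mem_tsupp_iff {p : ℕ × ℕ} : p ∈ tsupp G ↔ pderiv2 G p.1 p.2 0 0 ≠ 0 := by
  simp [tsupp, tcoeff, Nat.factorial_ne_zero]

theorem alphaM_le (hM : 1 ≤ M) {p : ℕ × ℕ} (hp : p ∈ tsupp G) :
    alphaM G M ≤ p.1 + M * p.2 := by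
  refine csInf_le ⟨0, ?_⟩ ⟨p, hp, rfl⟩
  rintro _ ⟨q, -, rfl⟩
  positivity

theorem finite_minimalSupport (hM : 1 ≤ M) :
    {p : ℕ × ℕ | p ∈ tsupp G ∧ (p.1 : ℝ) + M * p.2 = alphaM G M}.Finite := by
  refine (Set.finite_Iic (⌊alphaM G M⌋₊, ⌊alphaM G M⌋₊)).subset ?_
  rintro ⟨a, b⟩ ⟨-, h⟩
  have ha : (0 : ℝ) ≤ a := a.cast_nonneg
  have hb : (0 : ℝ) ≤ b := b.cast_nonneg
  have hMb : (b : ℝ) ≤ M * b := le_mul_of_one_le_left hb hM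
  simp only at h
  exact ⟨Nat.le_floor (by simp only; linarith), Nat.le_floor (by simp only; linarith)⟩

/-- `R_M(1, ⬝)` is a polynomial whose `b`-th coefficient vanishes exactly when `R_M` has no term
of degree `b` in `y`. -/
theorem exists_polynomial_RMpart (G : ℝ → ℝ → ℝ) (hM : 1 ≤ M) :
    ∃ P : ℝ[X], (∀ y, RMpart G M 1 y = P.eval y) ∧
      ∀ b, P.coeff b = 0 ↔ ∀ a : ℕ, (a, b) ∈ tsupp G → (a : ℝ) + M * b ≠ alphaM G M := by
  have hfin := finite_minimalSupport (G := G) hM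
  refine ⟨∑ p ∈ hfin.toFinset, monomial p.2 (tcoeff G p.1 p.2), fun y => ?_, fun b => ?_⟩
  · rw [RMpart, tsum_eq_sum (s := hfin.toFinset), eval_finsetSum]
    · refine Finset.sum_congr rfl fun p hp => ?_
      rw [Set.indicator_of_mem (hfin.mem_toFinset.1 hp), eval_monomial, one_pow, mul_one]
    · intro p hp
      exact Set.indicator_of_notMem (fun h => hp (hfin.mem_toFinset.2 h)) _
  · rw [finsetSum_coeff]
    simp only [coeff_monomial]
    constructor
    · intro hsum a ha hab
      rw [Finset.sum_eq_single (a, b)] at hsum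
      · exact ha (by simpa using hsum)
      · rintro ⟨a', b'⟩ hp hne
        refine if_neg fun hb => hne ?_
        simp only at hb
        subst hb
        have := ((hfin.mem_toFinset.1 hp).2 : (a' : ℝ) + M * b' = _)
        have : (a' : ℝ) = a := by linarith
        rw [Nat.cast_injective this]
      · exact fun hnot => absurd (hfin.mem_toFinset.2 ⟨ha, hab⟩) hnot
    · intro h
      refine Finset.sum_eq_zero fun p hp => if_neg fun hb => ?_
      subst hb
      have := hfin.mem_toFinset.1 hp
      exact h p.1 this.1 this.2

theorem alphaM_lt_of_coeff_eq_zero (hM : 1 ≤ M) {b : ℕ}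
    (h : ∀ a : ℕ, (a, b) ∈ tsupp G → (a : ℝ) + M * b ≠ alphaM G M) (a : ℕ)
    (ha : pderiv2 G a b 0 0 ≠ 0) : alphaM G M < a + M * b :=
  have hmem : (a, b) ∈ tsupp G := mem_tsupp_iff.2 ha
  lt_of_le_of_ne (alphaM_le hM hmem) (h a hmem).symm

end PrincipalPart

/-- Estimates (2.22a)-(2.22c): bounds on the derivatives of `G` on the sliver
`0 < x < μ`, `|y| < ν x^M`, when `G_M(1,0) ≠ 0` and `∂_y G_M(1,0) = ∂_y² G_M(1,0) = 0`. -/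
theorem stmt_7 (G : ℝ → ℝ → ℝ) (U₀ : Set (ℝ × ℝ)) (hU₀ : U₀ ∈ 𝓝 ((0 : ℝ), (0 : ℝ)))
    (hsm : ContDiffOn ℝ (⊤ : ℕ∞) (fun p : ℝ × ℝ => G p.1 p.2) U₀)
    (h0 : G 0 0 = 0) (hgrad : fderiv ℝ (fun p : ℝ × ℝ => G p.1 p.2) (0, 0) = 0)
    (M : ℝ) (hM : 1 ≤ M)
    (hGM : RMpart G M 1 0 ≠ 0)
    (hGM1 : deriv (fun y => RMpart G M 1 y) 0 = 0)
    (hGM2 : iteratedDeriv 2 (fun y => RMpart G M 1 y) 0 = 0) :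
    (∀ η > (0 : ℝ), ∃ μ > (0 : ℝ), ∃ ν > (0 : ℝ), ∀ x y : ℝ,
      0 < x → x < μ → |y| < ν * x ^ M →
        |pderiv2 G 0 1 x y| < η * x ^ (alphaM G M - M) ∧
        |pderiv2 G 0 2 x y| < η * x ^ (alphaM G M - 2 * M) ∧
        |pderiv2 G 1 1 x y| < η * x ^ (alphaM G M - M - 1)) ∧
    (∃ c₁ > (0 : ℝ), ∃ μ > (0 : ℝ), ∃ ν > (0 : ℝ), ∀ x y : ℝ,
      0 < x → x < μ → |y| < ν * x ^ M →
        c₁ * x ^ (alphaM G M - 1) ≤ |pderiv2 G 1 0 x y| ∧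
        c₁ * x ^ (alphaM G M - 2) ≤ |pderiv2 G 2 0 x y|) := by
  obtain ⟨r, hr, hball⟩ := Metric.mem_nhds_iff.1 hU₀
  have hG : ContDiffOn ℝ ∞ (fun p : ℝ × ℝ => G p.1 p.2) (Ioo (-r) r ×ˢ Ioo (-r) r) := by
    refine hsm.mono fun p hp => hball ?_
    simpa [Prod.dist_eq, abs_lt] using hp
  obtain ⟨P, hP, hcoeff⟩ := exists_polynomial_RMpart G hM
  simp only [hP] at hGM hGM1 hGM2
  rw [← Polynomial.coeff_zero_eq_eval_zero, Ne, hcoeff] at hGM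
  rw [Polynomial.deriv, ← Polynomial.coeff_zero_eq_eval_zero, Polynomial.coeff_derivative] at hGM1
  have hc1 : P.coeff 1 = 0 := by simpa using hGM1
  have hc2 : P.coeff 2 = 0 := by
    have hderiv : deriv (fun y => P.eval y) = fun y => P.derivative.eval y :=
      funext fun y => P.deriv
    rw [iteratedDeriv_succ, iteratedDeriv_one, hderiv, Polynomial.deriv] at hGM2
    simpa [← Polynomial.coeff_zero_eq_eval_zero, Polynomial.coeff_derivative] using hGM2
  push Not at hGM
  obtain ⟨n, hn, hnα⟩ := hGM
  simp only [Nat.cast_zero, mul_zero, add_zero] at hnα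
  have hn0 : pderiv2 G n 0 0 0 ≠ 0 := mem_tsupp_iff.1 hn
  have hα : ∀ a b : ℕ, pderiv2 G a b 0 0 ≠ 0 → alphaM G M ≤ a + M * b := fun a b h =>
    alphaM_le hM (p := (a, b)) (mem_tsupp_iff.2 h)
  have hlt1 := alphaM_lt_of_coeff_eq_zero hM ((hcoeff 1).1 hc1)
  have hlt2 := alphaM_lt_of_coeff_eq_zero hM ((hcoeff 2).1 hc2)
  have hn2 : 2 ≤ n := by
    by_contra! hlt
    interval_cases n
    · exact hn0 (by simpa [pderiv2] using h0)
    · refine hn0 ?_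
      have hd := hasDerivAt_fst_of_differentiableAt (differentiableAt_of_contDiffOn_isOpen
        (isOpen_Ioo.prod isOpen_Ioo) hG (x := 0) (y := 0) (by simp [hr]))
      rw [hgrad] at hd
      simpa [pderiv2] using hd.deriv
  refine ⟨fun η hη => ?_, ?_⟩
  · obtain ⟨μ₁, hμ₁, ν₁, hν₁, H₁⟩ := exists_abs_pderiv2_lt_small hr hG hM hα 0 1 hlt1 hη
    obtain ⟨μ₂, hμ₂, ν₂, hν₂, H₂⟩ := exists_abs_pderiv2_lt_small hr hG hM hα 0 2 hlt2 hη
    obtain ⟨μ₃, hμ₃, ν₃, hν₃, H₃⟩ := exists_abs_pderiv2_lt_small hr hG hM hα 1 1 hlt1 hη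
    refine ⟨min μ₁ (min μ₂ μ₃), by positivity, min ν₁ (min ν₂ ν₃), by positivity,
      fun x y hx hxμ hy => ?_⟩
    rw [min_mul_of_nonneg _ _ (by positivity), min_mul_of_nonneg _ _ (by positivity)] at hy
    simp only [lt_min_iff] at hxμ hy
    have h₁ := H₁ x y hx hxμ.1 hy.1
    have h₂ := H₂ x y hx hxμ.2.1 hy.2.1
    have h₃ := H₃ x y hx hxμ.2.2 hy.2.2
    refine ⟨?_, ?_, ?_⟩
    · convert h₁ using 3; push_cast; ring
    · convert h₂ using 3; push_cast; ring
    · convert h₃ using 3; push_cast; ring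
  · rw [← hnα] at hα ⊢
    obtain ⟨c, hc, μ, hμ, ν, hν, H⟩ :=
      exists_le_abs_pderiv2_fst hr hG hM hα hn0 (i := 1) (by omega)
    obtain ⟨c', hc', μ', hμ', ν', hν', H'⟩ := exists_le_abs_pderiv2_fst hr hG hM hα hn0 hn2
    refine ⟨min c c', by positivity, min μ μ', by positivity, min ν ν', by positivity,
      fun x y hx hxμ hy => ?_⟩
    rw [min_mul_of_nonneg _ _ (by positivity)] at hy
    simp only [lt_min_iff] at hxμ hy
    have h₁ := H x y hx hxμ.1 hy.1
    have h₂ := H' x y hx hxμ.2 hy.2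
    push_cast at h₁ h₂
    refine ⟨le_trans ?_ h₁, le_trans ?_ h₂⟩
    · gcongr; exact min_le_left _ _
    · gcongr; exact min_le_right _ _

end
end

section
/- Let R be a smooth function on a neighborhood of the origin in ℝ² with a zero of order exactly a ≥ 1 at the origin, i.e. every Taylor coefficient R_{a'b'} with a' + b' < a vanishes and some Taylor coefficient with a' + b' = a is nonzero. Then there exists an invertible linear map T of ℝ² such that ∂_x^a (R∘T)(0,0) ≠ 0 and ∂_y^a (R∘T)(0,0) ≠ 0; consequently the Newton polygon of R∘T is exactly N(R∘T) = {(t₁,t₂) ∈ ℝ² : t₁ ≥ 0, t₂ ≥ 0, t₁ + t₂ ≥ a}. -/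
open MeasureTheory Set Filter Topology

noncomputable section

/-- The space of smooth functions on the plane. -/
def smoothFns : Submodule ℝ (ℝ × ℝ → ℝ) where
  carrier := {f | ContDiff ℝ (⊤ : ℕ∞) f}
  add_mem' {f g} hf hg := by
    rw [mem_ofPred_eq] at hf hg ⊢
    exact hf.add hg
  zero_mem' := by
    rw [mem_ofPred_eq]
    exact contDiff_const
  smul_mem' c f hf := by
    rw [mem_ofPred_eq] at hf ⊢
    exact hf.const_smul c

theorem contDiff_smoothFns (f : smoothFns) : ContDiff ℝ (⊤ : ℕ∞) (f : ℝ × ℝ → ℝ) := f.2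

theorem differentiable_smoothFns (f : smoothFns) : Differentiable ℝ (f : ℝ × ℝ → ℝ) :=
  (contDiff_smoothFns f).differentiable (by simp)

theorem contDiff_fderiv_smoothFns (f : smoothFns) :
    ContDiff ℝ (⊤ : ℕ∞) (fderiv ℝ (f : ℝ × ℝ → ℝ)) :=
  (contDiff_smoothFns f).fderiv_right (by simp)

/-- The directional derivative as an operator on smooth functions. -/
def dirDeriv (v : ℝ × ℝ) : Module.End ℝ smoothFns where
  toFun f := ⟨fun p => fderiv ℝ (f : ℝ × ℝ → ℝ) p v,
    (contDiff_fderiv_smoothFns f).clm_apply contDiff_const⟩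
  map_add' f g := by
    ext p
    simp [fderiv_add (differentiable_smoothFns f p) (differentiable_smoothFns g p)]
  map_smul' c f := by
    ext p
    simp [fderiv_const_smul (differentiable_smoothFns f p)]

theorem dirDeriv_apply (v : ℝ × ℝ) (f : smoothFns) (p : ℝ × ℝ) :
    (dirDeriv v f : ℝ × ℝ → ℝ) p = fderiv ℝ (f : ℝ × ℝ → ℝ) p v := rfl

theorem dirDeriv_add (v w : ℝ × ℝ) : dirDeriv (v + w) = dirDeriv v + dirDeriv w := by
  ext f p
  simp [dirDeriv_apply]

theorem dirDeriv_smul (c : ℝ) (v : ℝ × ℝ) : dirDeriv (c • v) = c • dirDeriv v := by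
  ext f p
  simp [dirDeriv_apply]

theorem dirDeriv_dirDeriv_apply (v w : ℝ × ℝ) (f : smoothFns) (p : ℝ × ℝ) :
    (dirDeriv v (dirDeriv w f) : ℝ × ℝ → ℝ) p =
      fderiv ℝ (fderiv ℝ (f : ℝ × ℝ → ℝ)) p v w := by
  have hd : DifferentiableAt ℝ (fderiv ℝ (f : ℝ × ℝ → ℝ)) p :=
    ((contDiff_fderiv_smoothFns f).differentiable (by simp)) p
  have h : (dirDeriv w f : ℝ × ℝ → ℝ) = fun q => fderiv ℝ (f : ℝ × ℝ → ℝ) q w := rfl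
  rw [dirDeriv_apply, h, fderiv_clm_apply hd (differentiableAt_const w)]
  simp

theorem dirDeriv_commute (v w : ℝ × ℝ) : Commute (dirDeriv v) (dirDeriv w) := by
  ext f p
  have hs : IsSymmSndFDerivAt ℝ (f : ℝ × ℝ → ℝ) p :=
    (contDiff_smoothFns f).contDiffAt.isSymmSndFDerivAt (by
      rw [minSmoothness_of_isRCLikeNormedField]
      exact WithTop.coe_le_coe.2 (le_top : (2 : ℕ∞) ≤ ⊤))
  simp only [Module.End.mul_apply, dirDeriv_dirDeriv_apply]
  exact hs v w

/-- Precomposition of a smooth function with a linear map. -/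
def compLin (f : smoothFns) (T : (ℝ × ℝ) →L[ℝ] ℝ × ℝ) : smoothFns :=
  ⟨fun p => (f : ℝ × ℝ → ℝ) (T p), (contDiff_smoothFns f).comp T.contDiff⟩

theorem compLin_apply (f : smoothFns) (T : (ℝ × ℝ) →L[ℝ] ℝ × ℝ) (p : ℝ × ℝ) :
    (compLin f T : ℝ × ℝ → ℝ) p = (f : ℝ × ℝ → ℝ) (T p) := rfl

theorem dirDeriv_compLin (v : ℝ × ℝ) (f : smoothFns) (T : (ℝ × ℝ) →L[ℝ] ℝ × ℝ) :
    dirDeriv v (compLin f T) = compLin (dirDeriv (T v) f) T := by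
  ext p
  have h : HasFDerivAt (compLin f T : ℝ × ℝ → ℝ)
      ((fderiv ℝ (f : ℝ × ℝ → ℝ) (T p)).comp T) p :=
    (differentiable_smoothFns f (T p)).hasFDerivAt.comp p T.hasFDerivAt
  simp [dirDeriv_apply, compLin_apply, h.fderiv]

theorem dirDeriv_pow_compLin (n : ℕ) (v : ℝ × ℝ) (f : smoothFns)
    (T : (ℝ × ℝ) →L[ℝ] ℝ × ℝ) :
    (dirDeriv v ^ n) (compLin f T) = compLin ((dirDeriv (T v) ^ n) f) T := by
  induction n with
  | zero => simp
  | succ n ih => simp [pow_succ', Module.End.mul_apply, ih, dirDeriv_compLin]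

theorem iteratedDeriv_line (n : ℕ) (v p : ℝ × ℝ) (f : smoothFns) :
    iteratedDeriv n (fun t : ℝ => (f : ℝ × ℝ → ℝ) (p + t • v)) =
      fun t => ((dirDeriv v ^ n) f : ℝ × ℝ → ℝ) (p + t • v) := by
  induction n with
  | zero => simp
  | succ n ih =>
    rw [iteratedDeriv_succ, ih]
    funext t
    have hl : HasDerivAt (fun t : ℝ => p + t • v) v t := by
      simpa using ((hasDerivAt_id t).smul_const v).const_add p
    have h := (differentiable_smoothFns ((dirDeriv v ^ n) f) (p + t • v)).hasFDerivAt.comp_hasDerivAt t hl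
    rw [pow_succ', Module.End.mul_apply, dirDeriv_apply]
    exact h.deriv

theorem pderiv2_smooth (f : smoothFns) (i j : ℕ) (x y : ℝ) :
    pderiv2 (fun x y => (f : ℝ × ℝ → ℝ) (x, y)) i j x y =
      ((dirDeriv (1, 0) ^ i * dirDeriv (0, 1) ^ j) f : ℝ × ℝ → ℝ) (x, y) := by
  have hy (x' : ℝ) : iteratedDeriv j (fun y' => (f : ℝ × ℝ → ℝ) (x', y')) y =
      ((dirDeriv (0, 1) ^ j) f : ℝ × ℝ → ℝ) (x', y) := by
    simpa using congrFun (iteratedDeriv_line j (0, 1) (x', 0) f) y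
  simp only [pderiv2, hy]
  simpa using congrFun (iteratedDeriv_line i (1, 0) (0, y) ((dirDeriv (0, 1) ^ j) f)) x

theorem pderiv2_congr {R S : ℝ → ℝ → ℝ} {x y : ℝ}
    (h : ∀ᶠ p : ℝ × ℝ in 𝓝 (x, y), R p.1 p.2 = S p.1 p.2) (i j : ℕ) :
    pderiv2 R i j x y = pderiv2 S i j x y := by
  rw [nhds_prod_eq] at h
  exact Filter.EventuallyEq.iteratedDeriv_eq i
    (h.curry.mono fun x' hx' => Filter.EventuallyEq.iteratedDeriv_eq j hx')

theorem tcoeff_eq_zero_iff (R : ℝ → ℝ → ℝ) (i j : ℕ) :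
    tcoeff R i j = 0 ↔ pderiv2 R i j 0 0 = 0 := by
  have hi := Nat.factorial_ne_zero i
  have hj := Nat.factorial_ne_zero j
  simp [tcoeff, hi, hj]

/-- Every germ of a smooth function extends to a globally smooth function. -/
theorem exists_smoothFns_eventuallyEq {F : ℝ × ℝ → ℝ} {U : Set (ℝ × ℝ)} {p : ℝ × ℝ}
    (hU : U ∈ 𝓝 p) (hF : ContDiffOn ℝ (⊤ : ℕ∞) F U) :
    ∃ f : smoothFns, ∀ᶠ q in 𝓝 p, F q = (f : ℝ × ℝ → ℝ) q := by
  obtain ⟨r, hr, hrU⟩ := Metric.mem_nhds_iff.1 hU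
  let χ : ContDiffBump p := ⟨r / 3, r / 2, by positivity, by linarith⟩
  have hsm : ContDiff ℝ (⊤ : ℕ∞) (fun q => χ q • F q) := by
    refine contDiff_iff_contDiffAt.2 fun q => ?_
    by_cases hq : q ∈ tsupport fun q => χ q • F q
    swap
    · exact contDiffAt_const.congr_of_eventuallyEq (notMem_tsupport_iff_eventuallyEq.1 hq)
    have hq' : q ∈ Metric.ball p r := by
      have := tsupport_smul_subset_left (fun q => χ q) F hq
      rw [χ.tsupport_eq] at this
      exact Metric.closedBall_subset_ball (by simp only [χ]; linarith) this
    exact χ.contDiff.contDiffAt.smul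
      (hF.contDiffAt (mem_of_superset (Metric.isOpen_ball.mem_nhds hq') hrU))
  refine ⟨⟨_, hsm⟩, ?_⟩
  filter_upwards [χ.eventuallyEq_one] with q hq
  simp [hq]

/-- `f` vanishes to order `k` at the origin. -/
def VanishesToOrder (f : smoothFns) (k : ℕ) : Prop :=
  ∀ i j : ℕ, i + j < k → ((dirDeriv (1, 0) ^ i * dirDeriv (0, 1) ^ j) f : ℝ × ℝ → ℝ) 0 = 0

theorem dirDeriv_eq (v : ℝ × ℝ) :
    dirDeriv v = v.1 • dirDeriv (1, 0) + v.2 • dirDeriv (0, 1) := by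
  rw [← dirDeriv_smul, ← dirDeriv_smul, ← dirDeriv_add]
  simp

theorem VanishesToOrder.dirDeriv {f : smoothFns} {k : ℕ} (hf : VanishesToOrder f (k + 1))
    (v : ℝ × ℝ) : VanishesToOrder (dirDeriv v f) k := by
  intro i j hij
  have hx := hf (i + 1) j (by omega)
  have hy := hf i (j + 1) (by omega)
  have hc := ((dirDeriv_commute (1, 0) (0, 1)).pow_right j).eq
  rw [pow_succ, mul_assoc, hc, ← mul_assoc, Module.End.mul_apply] at hx
  rw [pow_succ, ← mul_assoc, Module.End.mul_apply] at hy
  simp [dirDeriv_eq v, -Module.End.mul_apply, hx, hy]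

theorem VanishesToOrder.dirDeriv_pow {f : smoothFns} {k n : ℕ}
    (hf : VanishesToOrder f (k + n)) (v : ℝ × ℝ) : VanishesToOrder
      ((_root_.dirDeriv v ^ n) f) k := by
  induction n generalizing k with
  | zero => simpa using hf
  | succ n ih =>
    rw [pow_succ', Module.End.mul_apply]
    exact VanishesToOrder.dirDeriv (ih (by rwa [add_right_comm, add_assoc])) v

theorem VanishesToOrder.apply_zero {f : smoothFns} {k : ℕ} (hf : VanishesToOrder f k)
    (hk : 0 < k) : (f : ℝ × ℝ → ℝ) 0 = 0 := by
  simpa using hf 0 0 hk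

theorem dirDeriv_pow_apply_zero (f : smoothFns) (a : ℕ) (s : ℝ) :
    ((dirDeriv (1, s) ^ a) f : ℝ × ℝ → ℝ) 0 = ∑ m ∈ Finset.range (a + 1),
      (a.choose m * ((dirDeriv (1, 0) ^ m * dirDeriv (0, 1) ^ (a - m)) f : ℝ × ℝ → ℝ) 0) *
        s ^ (a - m) := by
  have hc : Commute (dirDeriv (1, 0)) (s • dirDeriv (0, 1)) :=
    (dirDeriv_commute _ _).smul_right s
  rw [dirDeriv_eq, one_smul, hc.add_pow]
  simp only [LinearMap.sum_apply, Submodule.coe_sum, Finset.sum_apply, smul_pow,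
    mul_smul_comm, ← nsmul_eq_mul', ← Nat.cast_smul_eq_nsmul ℝ, LinearMap.smul_apply, Submodule.coe_smul, Pi.smul_apply,
    smul_eq_mul]
  refine Finset.sum_congr rfl fun m _ => ?_
  ring

/-- If some derivative of order `a` is nonzero, then two distinct directions have nonzero
pure `a`-th derivative. -/
theorem exists_two_directions (f : smoothFns) {i j : ℕ}
    (h : ((dirDeriv (1, 0) ^ i * dirDeriv (0, 1) ^ j) f : ℝ × ℝ → ℝ) 0 ≠ 0) :
    ∃ s t : ℝ, s ≠ t ∧ ((dirDeriv (1, s) ^ (i + j)) f : ℝ × ℝ → ℝ) 0 ≠ 0 ∧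
      ((dirDeriv (1, t) ^ (i + j)) f : ℝ × ℝ → ℝ) 0 ≠ 0 := by
  let c : ℕ → ℝ := fun m => (i + j).choose m *
    ((dirDeriv (1, 0) ^ m * dirDeriv (0, 1) ^ (i + j - m)) f : ℝ × ℝ → ℝ) 0
  let P : Polynomial ℝ := ∑ m ∈ Finset.range (i + j + 1),
    Polynomial.C (c m) * Polynomial.X ^ (i + j - m)
  have hPeval (s : ℝ) : P.eval s = ((dirDeriv (1, s) ^ (i + j)) f : ℝ × ℝ → ℝ) 0 := by
    simp [P, c, Polynomial.eval_finsetSum, dirDeriv_pow_apply_zero f, -Module.End.mul_apply]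
  have hcoeff : P.coeff j = c i := by
    simp only [P, Polynomial.finsetSum_coeff, Polynomial.coeff_C_mul_X_pow]
    rw [Finset.sum_eq_single i]
    · simp
    · intro m hm hmi
      rw [Finset.mem_range] at hm
      exact if_neg (by omega)
    · simp
  have hci : c i ≠ 0 := by
    have := (Nat.choose_pos (Nat.le_add_right i j)).ne'
    simp only [c, Nat.add_sub_cancel_left]
    exact mul_ne_zero (by exact_mod_cast this) h
  have hP : P ≠ 0 := fun h0 => hci (by rw [← hcoeff, h0, Polynomial.coeff_zero])
  obtain ⟨s, hs⟩ := Infinite.exists_notMem_finset P.roots.toFinset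
  obtain ⟨t, ht⟩ := Infinite.exists_notMem_finset (insert s P.roots.toFinset)
  simp only [Finset.mem_insert, Multiset.mem_toFinset, Polynomial.mem_roots hP, not_or,
    Polynomial.IsRoot.def, hPeval] at hs ht
  exact ⟨s, t, fun h => ht.1 h.symm, hs, ht.2⟩

/-- The linear automorphism of the plane sending the standard basis to `(1, s)`, `(1, t)`. -/
def slopeEquiv (s t : ℝ) (h : s ≠ t) : (ℝ × ℝ) ≃ₗ[ℝ] ℝ × ℝ where
  toFun p := (p.1 + p.2, s * p.1 + t * p.2)
  map_add' p q := by ext <;> simp <;> ring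
  map_smul' c p := by ext <;> simp <;> ring
  invFun p := ((t * p.1 - p.2) / (t - s), (p.2 - s * p.1) / (t - s))
  left_inv p := by
    have : t - s ≠ 0 := sub_ne_zero.2 h.symm
    ext <;> simp <;> field_simp <;> ring
  right_inv p := by
    have : t - s ≠ 0 := sub_ne_zero.2 h.symm
    ext <;> simp <;> field_simp <;> ring

theorem newtonPolygon_eq_of_order {R : ℝ → ℝ → ℝ} {a : ℕ} (ha : 1 ≤ a)
    (hlo : ∀ i j : ℕ, i + j < a → pderiv2 R i j 0 0 = 0)
    (hx : pderiv2 R a 0 0 0 ≠ 0) (hy : pderiv2 R 0 a 0 0 ≠ 0) :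
    newtonPolygon R = {q : ℝ × ℝ | 0 ≤ q.1 ∧ 0 ≤ q.2 ∧ (a : ℝ) ≤ q.1 + q.2} := by
  have ha' : (0 : ℝ) < a := by exact_mod_cast ha
  apply Subset.antisymm
  · refine convexHull_min ?_ ?_
    · refine iUnion₂_subset fun p hp q hq => ?_
      have hpa : a ≤ p.1 + p.2 := by
        by_contra hlt
        exact hp ((tcoeff_eq_zero_iff R _ _).2 (hlo _ _ (not_le.1 hlt)))
      have hpa' : (a : ℝ) ≤ p.1 + p.2 := by exact_mod_cast hpa
      exact ⟨(Nat.cast_nonneg _).trans hq.1, (Nat.cast_nonneg _).trans hq.2,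
        hpa'.trans (add_le_add hq.1 hq.2)⟩
    · rintro p ⟨hp₁, hp₂, hp⟩ q ⟨hq₁, hq₂, hq⟩ b c hb hc hbc
      refine ⟨?_, ?_, ?_⟩
      · simp only [Prod.fst_add, Prod.smul_fst, smul_eq_mul]; positivity
      · simp only [Prod.snd_add, Prod.smul_snd, smul_eq_mul]; positivity
      · simp only [Prod.fst_add, Prod.smul_fst, Prod.snd_add, Prod.smul_snd, smul_eq_mul]
        calc (a : ℝ) = b * a + c * a := by rw [← add_mul, hbc, one_mul]
          _ ≤ b * (p.1 + p.2) + c * (q.1 + q.2) := by gcongr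
          _ = _ := by ring
  · rintro ⟨x, y⟩ ⟨hx₀, hy₀, hxy⟩
    simp only at hx₀ hy₀ hxy
    have hright (u v : ℝ) (hu : a ≤ u) (hv : 0 ≤ v) : (u, v) ∈ newtonPolygon R :=
      subset_convexHull ℝ _ (mem_iUnion₂.2 ⟨(a, 0),
        fun h0 => hx ((tcoeff_eq_zero_iff R _ _).1 h0), by simpa using ⟨hu, hv⟩⟩)
    have hup (u v : ℝ) (hu : 0 ≤ u) (hv : a ≤ v) : (u, v) ∈ newtonPolygon R :=
      subset_convexHull ℝ _ (mem_iUnion₂.2 ⟨(0, a),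
        fun h0 => hy ((tcoeff_eq_zero_iff R _ _).1 h0), by simpa using ⟨hu, hv⟩⟩)
    rcases le_or_gt (a : ℝ) x with hax | hax
    · exact hright x y hax hy₀
    · have hd : 0 < (a : ℝ) - x := sub_pos.2 hax
      have hconv : Convex ℝ (newtonPolygon R) := convex_convexHull ℝ _
      have hmem := hconv (hright a 0 le_rfl le_rfl)
        (hup 0 (a * y / (a - x)) le_rfl (by rw [le_div_iff₀ hd]; gcongr; linarith))
        (a := x / a) (b := (a - x) / a) (by positivity) (by positivity) (by field_simp; ring)
      have hfst : x / a * a + (a - x) / a * 0 = x := by field_simp; ring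
      have hsnd : x / a * 0 + (a - x) / a * (a * y / (a - x)) = y := by field_simp; ring
      simpa only [Prod.smul_mk, Prod.mk_add_mk, smul_eq_mul, hfst, hsnd] using hmem

/-- For a generic invertible linear change of variables `T`, both pure `a`-th derivatives of
`R∘T` are nonzero, and the Newton polygon of `R∘T` is exactly `{t₁, t₂ ≥ 0, t₁ + t₂ ≥ a}`. -/
theorem stmt_8 (R : ℝ → ℝ → ℝ) (U₀ : Set (ℝ × ℝ)) (hU₀ : U₀ ∈ 𝓝 ((0 : ℝ), (0 : ℝ)))
    (hsm : ContDiffOn ℝ (⊤ : ℕ∞) (fun p : ℝ × ℝ => R p.1 p.2) U₀)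
    (a : ℕ) (ha : 1 ≤ a)
    (hlo : ∀ a' b' : ℕ, a' + b' < a → tcoeff R a' b' = 0)
    (hex : ∃ a' b' : ℕ, a' + b' = a ∧ tcoeff R a' b' ≠ 0) :
    ∃ T : (ℝ × ℝ) ≃ₗ[ℝ] ℝ × ℝ,
      pderiv2 (fun x y => R (T (x, y)).1 (T (x, y)).2) a 0 0 0 ≠ 0 ∧
      pderiv2 (fun x y => R (T (x, y)).1 (T (x, y)).2) 0 a 0 0 ≠ 0 ∧
      newtonPolygon (fun x y => R (T (x, y)).1 (T (x, y)).2) =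
        {q : ℝ × ℝ | 0 ≤ q.1 ∧ 0 ≤ q.2 ∧ (a : ℝ) ≤ q.1 + q.2} := by
  obtain ⟨f, hf⟩ := exists_smoothFns_eventuallyEq hU₀ hsm
  have hR (i j : ℕ) : tcoeff R i j = 0 ↔
      ((dirDeriv (1, 0) ^ i * dirDeriv (0, 1) ^ j) f : ℝ × ℝ → ℝ) 0 = 0 := by
    rw [tcoeff_eq_zero_iff, pderiv2_congr (S := fun x y => (f : ℝ × ℝ → ℝ) (x, y)) hf,
      pderiv2_smooth, Prod.mk_zero_zero]
  have hvan : VanishesToOrder f a := fun i j hij => (hR i j).1 (hlo i j hij)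
  obtain ⟨i₀, j₀, rfl, hne⟩ := hex
  obtain ⟨s, t, hst, hs, ht⟩ := exists_two_directions f (mt (hR i₀ j₀).2 hne)
  let T := slopeEquiv s t hst
  let L : (ℝ × ℝ) →L[ℝ] ℝ × ℝ := LinearMap.toContinuousLinearMap T.toLinearMap
  have hL₁ : L (1, 0) = (1, s) := by simp [L, T, slopeEquiv]
  have hL₂ : L (0, 1) = (1, t) := by simp [L, T, slopeEquiv]
  have hT (i j : ℕ) : pderiv2 (fun x y => R (T (x, y)).1 (T (x, y)).2) i j 0 0 =
      ((dirDeriv (1, s) ^ i) ((dirDeriv (1, t) ^ j) f) : ℝ × ℝ → ℝ) 0 := by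
    have hcont : Tendsto L (𝓝 ((0 : ℝ), (0 : ℝ))) (𝓝 ((0 : ℝ), (0 : ℝ))) := by
      have h := L.continuous.tendsto 0
      rwa [map_zero] at h
    rw [pderiv2_congr (S := fun x y => (compLin f L : ℝ × ℝ → ℝ) (x, y)) (hcont.eventually hf),
      pderiv2_smooth, Module.End.mul_apply, dirDeriv_pow_compLin, dirDeriv_pow_compLin, hL₁, hL₂,
      compLin_apply, Prod.mk_zero_zero, map_zero]
  have hx : pderiv2 (fun x y => R (T (x, y)).1 (T (x, y)).2) (i₀ + j₀) 0 0 0 ≠ 0 := by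
    rw [hT]
    simpa using hs
  have hy : pderiv2 (fun x y => R (T (x, y)).1 (T (x, y)).2) 0 (i₀ + j₀) 0 0 ≠ 0 := by
    rw [hT]
    simpa using ht
  refine ⟨T, hx, hy, newtonPolygon_eq_of_order ha (fun i j hij => ?_) hx hy⟩
  rw [hT]
  have hsplit : i₀ + j₀ = (i₀ + j₀ - (i + j) + i) + j := by omega
  rw [hsplit] at hvan
  exact ((hvan.dirDeriv_pow _).dirDeriv_pow _).apply_zero (by omega)

end
end

section
/- Let F be a smooth function on a neighborhood of the origin in ℝ² with F(0,0) = 0, ∇F(0,0) = (0,0) and nonvanishing Taylor series, let V(F) denote the finite set of vertices (extreme points) of the Newton polygon N(F), and define F*(x,y) = (Σ_{(a,b) ∈ V(F)} x^{2a} y^{2b})^{1/2}. Then for every t > 0: the function (x,y) ↦ F*(x,y)^{−t} is integrable on some neighborhood of the origin if and only if t < 1/d(F). -/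
open MeasureTheory Set Filter Topology

noncomputable section

theorem natCast_mem_newtonPolygon_of_le {F : ℝ → ℝ → ℝ} {p : ℕ × ℕ} (hp : p ∈ tsupp F)
    {q : ℝ × ℝ} (h₁ : (p.1 : ℝ) ≤ q.1) (h₂ : (p.2 : ℝ) ≤ q.2) : q ∈ newtonPolygon F :=
  subset_convexHull ℝ _ (mem_iUnion₂.2 ⟨p, hp, h₁, h₂⟩)

/-- A convex set containing every quadrant based at the support contains the Newton polygon. -/
theorem newtonPolygon_subset {F : ℝ → ℝ → ℝ} {C : Set (ℝ × ℝ)} (hC : Convex ℝ C)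
    (h : ∀ p ∈ tsupp F, ∀ q : ℝ × ℝ, (p.1 : ℝ) ≤ q.1 → (p.2 : ℝ) ≤ q.2 → q ∈ C) :
    newtonPolygon F ⊆ C :=
  convexHull_min (iUnion₂_subset fun p hp q hq => h p hp q hq.1 hq.2) hC

theorem isUpperSet_newtonPolygon (F : ℝ → ℝ → ℝ) : IsUpperSet (newtonPolygon F) := by
  intro q r hqr hq
  have hsub : newtonPolygon F ⊆ (fun z => (r - q) + z) ⁻¹' newtonPolygon F := by
    refine newtonPolygon_subset ((convex_convexHull ℝ _).translate_preimage_right _) ?_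
    intro p hp z h₁ h₂
    have h₃ := hqr.1
    have h₄ := hqr.2
    refine natCast_mem_newtonPolygon_of_le hp ?_ ?_ <;> simp <;> linarith
  simpa using hsub hq

/-- An extreme point of the Newton polygon that dominates a point of the support equals it. -/
theorem eq_of_mem_extremePoints_of_le {F : ℝ → ℝ → ℝ} {p : ℕ × ℕ} (hp : p ∈ tsupp F)
    {q : ℝ × ℝ} (hq : q ∈ (newtonPolygon F).extremePoints ℝ)
    (h₁ : (p.1 : ℝ) ≤ q.1) (h₂ : (p.2 : ℝ) ≤ q.2) : ((p.1 : ℝ), (p.2 : ℝ)) = q := by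
  refine hq.2 (natCast_mem_newtonPolygon_of_le hp le_rfl le_rfl)
    (natCast_mem_newtonPolygon_of_le (q := (2 * q.1 - p.1, 2 * q.2 - p.2)) hp ?_ ?_)
    ⟨1 / 2, 1 / 2, by norm_num, by norm_num, by norm_num, ?_⟩
  · simp only; linarith
  · simp only; linarith
  · ext <;> simp <;> ring

/-- The vertices of the Newton polygon, as lattice points. -/
def vertexSet (F : ℝ → ℝ → ℝ) : Set (ℕ × ℕ) :=
  {p : ℕ × ℕ | ((p.1 : ℝ), (p.2 : ℝ)) ∈ (newtonPolygon F).extremePoints ℝ}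

theorem vertexSet_subset_tsupp (F : ℝ → ℝ → ℝ) : vertexSet F ⊆ tsupp F := by
  intro p hp
  obtain ⟨r, hr, h₁, h₂⟩ := mem_iUnion₂.1 (extremePoints_convexHull_subset hp)
  have h := eq_of_mem_extremePoints_of_le hr hp h₁ h₂
  have hrp : r = p := by
    simp only [Prod.mk.injEq, Nat.cast_inj] at h
    exact Prod.ext h.1 h.2
  exact hrp ▸ hr

theorem finite_vertexSet (F : ℝ → ℝ → ℝ) : (vertexSet F).Finite := by
  have hanti : IsAntichain (· ≤ ·) (vertexSet F) := by
    intro p hp r hr hne hle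
    have h := eq_of_mem_extremePoints_of_le (vertexSet_subset_tsupp F hp) hr
      (Nat.cast_le.2 hle.1) (Nat.cast_le.2 hle.2)
    simp only [Prod.mk.injEq, Nat.cast_inj] at h
    exact hne (Prod.ext h.1 h.2)
  exact hanti.finite_of_partiallyWellOrderedOn (isPWO_of_wellQuasiOrderedLE _)

theorem finite_setOf_linear_le {u w : ℝ} (hu : 0 < u) (hw : 0 < w) (C : ℝ) :
    {p : ℕ × ℕ | u * p.1 + w * p.2 ≤ C}.Finite := by
  refine ((finite_Iic ⌈C / u⌉₊).prod (finite_Iic ⌈C / w⌉₊)).subset ?_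
  intro p hp
  have hp' : u * p.1 + w * p.2 ≤ C := hp
  have h₁ : 0 ≤ u * (p.1 : ℝ) := by positivity
  have h₂ : 0 ≤ w * (p.2 : ℝ) := by positivity
  refine ⟨?_, ?_⟩
  · have : (p.1 : ℝ) ≤ C / u := by rw [le_div_iff₀ hu]; linarith
    exact Nat.cast_le.1 (this.trans (Nat.le_ceil _))
  · have : (p.2 : ℝ) ≤ C / w := by rw [le_div_iff₀ hw]; linarith
    exact Nat.cast_le.1 (this.trans (Nat.le_ceil _))

/-- A half-plane with one of the two open halves of its boundary line removed is convex. -/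
theorem convex_lex_halfPlane (u w m c : ℝ) :
    Convex ℝ {q : ℝ × ℝ | m < u * q.1 + w * q.2 ∨ (u * q.1 + w * q.2 = m ∧ c ≤ q.1)} := by
  intro q hq r hr a b ha hb hab
  have key : u * (a • q + b • r).1 + w * (a • q + b • r).2 =
      a * (u * q.1 + w * q.2) + b * (u * r.1 + w * r.2) := by simp; ring
  have hb' : b = 1 - a := by linarith
  rw [mem_ofPred_eq, key]
  simp only [Prod.fst_add, Prod.smul_fst, smul_eq_mul]
  rcases ha.eq_or_lt with rfl | ha
  · obtain rfl : b = 1 := by linarith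
    simpa using hr
  rcases hb.eq_or_lt with rfl | hb
  · obtain rfl : a = 1 := by linarith
    simpa using hq
  subst hb'
  rcases hq with hq | ⟨hq, hq'⟩ <;> rcases hr with hr | ⟨hr, hr'⟩
  · left; nlinarith
  · left; nlinarith
  · left; nlinarith
  · right
    constructor
    · rw [hq, hr]; ring
    · nlinarith

/-- A linear functional with positive coefficients attains its minimum over the Newton polygon
at a vertex. -/
theorem exists_mem_vertexSet_forall_le {F : ℝ → ℝ → ℝ} (hF : (tsupp F).Nonempty) {u w : ℝ}
    (hu : 0 < u) (hw : 0 < w) :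
    ∃ p ∈ vertexSet F, ∀ q ∈ newtonPolygon F, u * p.1 + w * p.2 ≤ u * q.1 + w * q.2 := by
  obtain ⟨p₀, hp₀⟩ := hF
  let T : Set (ℕ × ℕ) := tsupp F ∩ {p | u * p.1 + w * p.2 ≤ u * p₀.1 + w * p₀.2}
  have hT : T.Finite := (finite_setOf_linear_le hu hw _).subset inter_subset_right
  obtain ⟨p, hpT, hp⟩ := exists_min_image T
    (fun p => toLex ((u * p.1 + w * p.2 : ℝ), (p.1 : ℝ))) hT
    ⟨p₀, hp₀, le_refl (u * (p₀.1 : ℝ) + w * p₀.2)⟩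
  have hmin : ∀ r ∈ tsupp F, u * p.1 + w * p.2 < u * r.1 + w * r.2 ∨
      (u * r.1 + w * r.2 = u * p.1 + w * p.2 ∧ (p.1 : ℝ) ≤ r.1) := by
    intro r hr
    by_cases hrT : r ∈ T
    · have h := hp r hrT
      rw [Prod.Lex.toLex_le_toLex] at h
      exact h.imp id fun h => ⟨h.1.symm, h.2⟩
    · left
      have h : ¬ (u * r.1 + w * r.2 ≤ u * p₀.1 + w * p₀.2) := fun h => hrT ⟨hr, h⟩
      exact lt_of_le_of_lt hpT.2 (not_le.1 h)
  have hsub := newtonPolygon_subset (F := F)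
    (convex_lex_halfPlane u w (u * p.1 + w * p.2) p.1) (by
      intro r hr q h₁ h₂
      have h₃ : u * r.1 ≤ u * q.1 := by gcongr
      have h₄ : w * r.2 ≤ w * q.2 := by gcongr
      rcases hmin r hr with h | ⟨h, h'⟩
      · left; linarith
      · rcases (add_le_add h₃ h₄).lt_or_eq with h₅ | h₅
        · left; linarith
        · right; exact ⟨by linarith, by linarith⟩)
  have hle : ∀ q ∈ newtonPolygon F, u * p.1 + w * p.2 ≤ u * q.1 + w * q.2 := by
    intro q hq
    rcases hsub hq with h | h
    · exact h.le
    · exact h.1.ge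
  refine ⟨p, ⟨natCast_mem_newtonPolygon_of_le hpT.1 le_rfl le_rfl, ?_⟩, hle⟩
  rintro q hq r hr ⟨a, b, ha, hb, hab, hqr⟩
  have e₁ : a * q.1 + b * r.1 = p.1 := by simpa using congrArg Prod.fst hqr
  have e₂ : a * q.2 + b * r.2 = p.2 := by simpa using congrArg Prod.snd hqr
  obtain rfl : b = 1 - a := by linarith
  have hlq := hle q hq
  have hlr := hle r hr
  have hsum : a * (u * q.1 + w * q.2 - (u * p.1 + w * p.2)) +
      (1 - a) * (u * r.1 + w * r.2 - (u * p.1 + w * p.2)) = 0 := by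
    rw [← e₁, ← e₂]; ring
  have hq₀ : u * q.1 + w * q.2 = u * p.1 + w * p.2 := by nlinarith
  have hr₀ : u * r.1 + w * r.2 = u * p.1 + w * p.2 := by nlinarith
  have hq₁ : (p.1 : ℝ) ≤ q.1 := by
    rcases hsub hq with h | h
    · exact absurd hq₀ h.ne'
    · exact h.2
  have hr₁ : (p.1 : ℝ) ≤ r.1 := by
    rcases hsub hr with h | h
    · exact absurd hr₀ h.ne'
    · exact h.2
  have hq₂ : q.1 = p.1 := by nlinarith
  refine Prod.ext hq₂ ?_
  rw [hq₂] at hq₀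
  exact mul_left_cancel₀ hw.ne' (by linarith)

theorem vertexSet_nonempty {F : ℝ → ℝ → ℝ} (hF : (tsupp F).Nonempty) :
    (vertexSet F).Nonempty :=
  let ⟨p, hp, _⟩ := exists_mem_vertexSet_forall_le hF one_pos one_pos
  ⟨p, hp⟩

theorem vertexFn_eq (F : ℝ → ℝ → ℝ) (x y : ℝ) :
    vertexFn F x y =
      √(∑ p ∈ (finite_vertexSet F).toFinset, x ^ (2 * p.1) * y ^ (2 * p.2)) := by
  unfold vertexFn
  rw [tsum_eq_sum (s := (finite_vertexSet F).toFinset)]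
  · congr 1
    refine Finset.sum_congr rfl fun p hp => indicator_of_mem ?_ _
    exact (Finite.mem_toFinset _).1 hp
  · intro p hp
    exact indicator_of_notMem (fun h => hp ((Finite.mem_toFinset _).2 h)) _

theorem continuous_vertexFn (F : ℝ → ℝ → ℝ) :
    Continuous fun p : ℝ × ℝ => vertexFn F p.1 p.2 := by
  simp only [vertexFn_eq]
  fun_prop

theorem abs_pow_mul_abs_pow_le_vertexFn {F : ℝ → ℝ → ℝ} {p : ℕ × ℕ} (hp : p ∈ vertexSet F)
    (x y : ℝ) : |x| ^ p.1 * |y| ^ p.2 ≤ vertexFn F x y := by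
  rw [vertexFn_eq]
  refine Real.le_sqrt_of_sq_le ?_
  have h : (|x| ^ p.1 * |y| ^ p.2) ^ 2 = x ^ (2 * p.1) * y ^ (2 * p.2) := by
    rw [mul_pow, ← pow_mul, ← pow_mul, mul_comm p.1, mul_comm p.2, pow_mul, pow_mul, sq_abs,
      sq_abs, ← pow_mul, ← pow_mul]
  rw [h]
  refine Finset.single_le_sum (f := fun p : ℕ × ℕ => x ^ (2 * p.1) * y ^ (2 * p.2))
    (fun r _ => ?_) ((Finite.mem_toFinset _).2 hp)
  simp only [pow_mul]
  positivity

theorem vertexFn_pos {F : ℝ → ℝ → ℝ} (hF : (tsupp F).Nonempty) {x y : ℝ} (hx : x ≠ 0)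
    (hy : y ≠ 0) : 0 < vertexFn F x y := by
  obtain ⟨p, hp⟩ := vertexSet_nonempty hF
  exact lt_of_lt_of_le (by positivity) (abs_pow_mul_abs_pow_le_vertexFn hp x y)

/-- If the Newton polygon contains `(d, d)`, then `F*` dominates `|x|ᵈ |y|ᵈ` near the origin. -/
theorem rpow_mul_rpow_le_vertexFn {F : ℝ → ℝ → ℝ} (hF : (tsupp F).Nonempty) {d : ℝ}
    (hd : (d, d) ∈ newtonPolygon F) {x y : ℝ} (hx₀ : x ≠ 0) (hy₀ : y ≠ 0)
    (hx : |x| < 1) (hy : |y| < 1) : |x| ^ d * |y| ^ d ≤ vertexFn F x y := by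
  have hx' := abs_pos.2 hx₀
  have hy' := abs_pos.2 hy₀
  obtain ⟨p, hp, hle⟩ := exists_mem_vertexSet_forall_le hF
    (neg_pos.2 (Real.log_neg hx' hx)) (neg_pos.2 (Real.log_neg hy' hy))
  refine le_trans ?_ (abs_pow_mul_abs_pow_le_vertexFn hp x y)
  rw [← Real.rpow_natCast, ← Real.rpow_natCast, Real.rpow_def_of_pos hx',
    Real.rpow_def_of_pos hx', Real.rpow_def_of_pos hy', Real.rpow_def_of_pos hy',
    ← Real.exp_add, ← Real.exp_add, Real.exp_le_exp]
  have h := hle _ hd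
  simp only at h
  linarith

theorem diagonal_nonempty {F : ℝ → ℝ → ℝ} (hF : (tsupp F).Nonempty) :
    {t : ℝ | (t, t) ∈ newtonPolygon F}.Nonempty := by
  obtain ⟨p, hp⟩ := hF
  exact ⟨max p.1 p.2, natCast_mem_newtonPolygon_of_le hp (le_max_left _ _) (le_max_right _ _)⟩

theorem half_le_of_diagonal_mem {F : ℝ → ℝ → ℝ} (h0 : F 0 0 = 0) {t : ℝ}
    (ht : (t, t) ∈ newtonPolygon F) : 1 / 2 ≤ t := by
  have hconv : Convex ℝ {q : ℝ × ℝ | 1 ≤ q.1 + q.2} := by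
    intro q hq r hr a b ha hb hab
    simp only [mem_ofPred_eq, Prod.fst_add, Prod.snd_add, Prod.smul_fst, Prod.smul_snd,
      smul_eq_mul] at *
    nlinarith
  have hsub : newtonPolygon F ⊆ {q : ℝ × ℝ | 1 ≤ q.1 + q.2} := by
    refine newtonPolygon_subset hconv fun p hp q h₁ h₂ => ?_
    have hp₀ : 1 ≤ p.1 + p.2 := by
      by_contra hlt
      have e₁ : p.1 = 0 := by omega
      have e₂ : p.2 = 0 := by omega
      exact hp (by simp [tcoeff, pderiv2, e₁, e₂, h0])
    have hp₁ : (1 : ℝ) ≤ p.1 + p.2 := by exact_mod_cast hp₀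
    rw [mem_ofPred_eq]
    linarith
  have h : 1 ≤ t + t := hsub ht
  linarith

theorem newtonDist_pos {F : ℝ → ℝ → ℝ} (h0 : F 0 0 = 0) (hF : (tsupp F).Nonempty) :
    0 < newtonDist F :=
  lt_of_lt_of_le (by norm_num : (0 : ℝ) < 1 / 2)
    (le_csInf (diagonal_nonempty hF) fun _ => half_le_of_diagonal_mem h0)

/-- A supporting line of the Newton polygon at its intersection with the bisectrix. -/
theorem exists_supporting_line {F : ℝ → ℝ → ℝ} (h0 : F 0 0 = 0) (hF : (tsupp F).Nonempty) :
    ∃ α β : ℝ, 0 ≤ α ∧ 0 ≤ β ∧ 0 < α + β ∧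
      ∀ q ∈ newtonPolygon F, newtonDist F * (α + β) ≤ α * q.1 + β * q.2 := by
  set d := newtonDist F with hd
  have hdisj : Disjoint (Iio d ×ˢ Iio d) (newtonPolygon F) := by
    refine disjoint_left.2 fun q hq hqN => ?_
    have hmem : (max q.1 q.2, max q.1 q.2) ∈ newtonPolygon F :=
      isUpperSet_newtonPolygon F (show q ≤ _ from ⟨le_max_left _ _, le_max_right _ _⟩) hqN
    have h : d ≤ max q.1 q.2 :=
      csInf_le ⟨1 / 2, fun _ => half_le_of_diagonal_mem h0⟩ hmem
    exact absurd (max_lt hq.1 hq.2) (not_lt.2 h)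
  obtain ⟨f, c, hlt, hge⟩ := geometric_hahn_banach_open
    ((convex_Iio d).prod (convex_Iio d)) (isOpen_Iio.prod isOpen_Iio)
    (convex_convexHull ℝ _) hdisj
  have hf : ∀ q : ℝ × ℝ, f q = f (1, 0) * q.1 + f (0, 1) * q.2 := by
    intro q
    have hq : q = q.1 • ((1 : ℝ), (0 : ℝ)) + q.2 • ((0 : ℝ), (1 : ℝ)) := by ext <;> simp
    conv_lhs => rw [hq]
    rw [map_add, map_smul, map_smul, smul_eq_mul, smul_eq_mul]
    ring
  set α := f (1, 0)
  set β := f (0, 1)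
  have hlt' : ∀ a b : ℝ, a < d → b < d → α * a + β * b < c := fun a b ha hb => by
    have h := hlt (a, b) ⟨ha, hb⟩
    rwa [hf] at h
  have hα : 0 ≤ α := by
    by_contra! hneg
    set K := |c - α * (d - 1) - β * (d - 1)| / (-α) with hK
    have hK₀ : 0 ≤ K := div_nonneg (abs_nonneg _) (by linarith)
    have hKα : K * (-α) = |c - α * (d - 1) - β * (d - 1)| :=
      div_mul_cancel₀ _ (by linarith)
    have h := hlt' (d - 1 - K) (d - 1) (by linarith) (by linarith)
    have h' := le_abs_self (c - α * (d - 1) - β * (d - 1))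
    nlinarith
  have hβ : 0 ≤ β := by
    by_contra! hneg
    set K := |c - α * (d - 1) - β * (d - 1)| / (-β) with hK
    have hK₀ : 0 ≤ K := div_nonneg (abs_nonneg _) (by linarith)
    have hKβ : K * (-β) = |c - α * (d - 1) - β * (d - 1)| :=
      div_mul_cancel₀ _ (by linarith)
    have h := hlt' (d - 1) (d - 1 - K) (by linarith) (by linarith)
    have h' := le_abs_self (c - α * (d - 1) - β * (d - 1))
    nlinarith
  have hpos : 0 < α + β := by
    by_contra! hle
    have hα₀ : α = 0 := by linarith
    have hβ₀ : β = 0 := by linarith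
    obtain ⟨s, hs⟩ := diagonal_nonempty hF
    have h₁ := hlt' (d - 1) (d - 1) (by linarith) (by linarith)
    have h₂ := hge _ hs
    rw [hf, hα₀, hβ₀] at h₂
    rw [hα₀, hβ₀] at h₁
    linarith
  refine ⟨α, β, hα, hβ, hpos, fun q hq => ?_⟩
  rw [← hf]
  refine le_trans ?_ (hge q hq)
  rw [← le_div_iff₀ hpos]
  refine le_of_forall_lt fun s hs => ?_
  rw [lt_div_iff₀ hpos]
  have h := hlt' s s hs hs
  linarith

theorem integrableOn_abs_rpow {s : ℝ} (hs : -1 < s) :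
    IntegrableOn (fun x : ℝ => |x| ^ s) (Ioo (-1) 1) := by
  have hpos : IntegrableOn (fun x : ℝ => |x| ^ s) (Ioc 0 1) := by
    have h : IntegrableOn (fun x : ℝ => x ^ s) (Ioc 0 1) :=
      (intervalIntegrable_iff_integrableOn_Ioc_of_le zero_le_one).1
        (intervalIntegral.intervalIntegrable_rpow' hs)
    exact h.congr_fun (fun x hx => by simp [abs_of_pos hx.1]) measurableSet_Ioc
  have hneg : IntegrableOn (fun x : ℝ => |x| ^ s) (Ico (-1) 0) := by
    have h := hpos.comp_neg
    simpa using h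
  have hzero : IntegrableOn (fun x : ℝ => |x| ^ s) {0} :=
    integrableOn_singleton (hx := by simp)
  refine ((hneg.union hzero).union hpos).mono_set fun x hx => ?_
  rcases lt_trichotomy x 0 with h | h | h
  · exact Or.inl (Or.inl ⟨hx.1.le, h⟩)
  · exact Or.inl (Or.inr h)
  · exact Or.inr ⟨h, hx.2.le⟩

theorem ae_fst_ne_zero_and_snd_ne_zero :
    ∀ᵐ p : ℝ × ℝ, p.1 ≠ 0 ∧ p.2 ≠ 0 := by
  have h : ∀ᵐ x : ℝ, x ≠ 0 := Measure.ae_ne volume 0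
  have h₁ : ∀ᵐ p : ℝ × ℝ, p.1 ≠ 0 := Measure.quasiMeasurePreserving_fst.ae h
  have h₂ : ∀ᵐ p : ℝ × ℝ, p.2 ≠ 0 := Measure.quasiMeasurePreserving_snd.ae h
  exact h₁.and h₂

theorem integrableOn_vertexFn_rpow {F : ℝ → ℝ → ℝ} (hF : (tsupp F).Nonempty) {t d : ℝ}
    (ht : 0 < t) (hd : (d, d) ∈ newtonPolygon F) (htd : t * d < 1) :
    IntegrableOn (fun p : ℝ × ℝ => vertexFn F p.1 p.2 ^ (-t)) (Ioo (-1) 1 ×ˢ Ioo (-1) 1) := by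
  have hs : -1 < -(t * d) := by linarith
  have hdom : IntegrableOn (fun p : ℝ × ℝ => |p.1| ^ (-(t * d)) * |p.2| ^ (-(t * d)))
      (Ioo (-1) 1 ×ˢ Ioo (-1) 1) := by
    have h := (integrableOn_abs_rpow hs).integrable.mul_prod (integrableOn_abs_rpow hs).integrable
    rwa [Measure.prod_restrict] at h
  refine Integrable.mono' hdom
    ((continuous_vertexFn F).measurable.pow_const _).aestronglyMeasurable ?_
  filter_upwards [ae_restrict_of_ae ae_fst_ne_zero_and_snd_ne_zero,
    ae_restrict_mem (measurableSet_Ioo.prod measurableSet_Ioo)] with p hp hpI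
  have hx := abs_pos.2 hp.1
  have hy := abs_pos.2 hp.2
  have hle := rpow_mul_rpow_le_vertexFn hF hd hp.1 hp.2 (abs_lt.2 hpI.1) (abs_lt.2 hpI.2)
  rw [Real.norm_of_nonneg (Real.rpow_nonneg (vertexFn_pos hF hp.1 hp.2).le _)]
  refine (Real.rpow_le_rpow_of_nonpos (by positivity) hle (by linarith)).trans_eq ?_
  rw [Real.mul_rpow (by positivity) (by positivity), ← Real.rpow_mul hx.le,
    ← Real.rpow_mul hy.le]
  ring_nf

/-- On the anisotropic box of sides `ε^α`, `ε^β`, a supporting line `α t₁ + β t₂ = c` bounds `F*`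
by a multiple of `ε^c`. -/
theorem vertexFn_le {F : ℝ → ℝ → ℝ} {α β c : ℝ}
    (hline : ∀ q ∈ newtonPolygon F, c ≤ α * q.1 + β * q.2) {ε x y : ℝ} (hε : 0 < ε)
    (hε₁ : ε ≤ 1) (hx₀ : 0 ≤ x) (hy₀ : 0 ≤ y) (hx : x ≤ ε ^ α) (hy : y ≤ ε ^ β) :
    vertexFn F x y ≤ √(finite_vertexSet F).toFinset.card * ε ^ c := by
  rw [vertexFn_eq, ← Real.sqrt_sq (Real.rpow_nonneg hε.le c), ← Real.sqrt_mul (Nat.cast_nonneg _)]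
  refine Real.sqrt_le_sqrt ?_
  rw [← nsmul_eq_mul]
  refine Finset.sum_le_card_nsmul _ _ _ fun p hp => ?_
  have hp' := hline _ ((Finite.mem_toFinset _).1 hp).1
  simp only at hp'
  have hprod : x ^ p.1 * y ^ p.2 ≤ ε ^ c := calc
    x ^ p.1 * y ^ p.2 ≤ (ε ^ α) ^ p.1 * (ε ^ β) ^ p.2 := by gcongr
    _ = ε ^ (α * p.1 + β * p.2) := by
      rw [← Real.rpow_natCast, ← Real.rpow_natCast, ← Real.rpow_mul hε.le,
        ← Real.rpow_mul hε.le, ← Real.rpow_add hε]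
    _ ≤ ε ^ c := Real.rpow_le_rpow_of_exponent_ge hε hε₁ hp'
  calc x ^ (2 * p.1) * y ^ (2 * p.2) = (x ^ p.1 * y ^ p.2) ^ 2 := by ring
    _ ≤ (ε ^ c) ^ 2 := by gcongr

theorem not_integrableOn_vertexFn_rpow {F : ℝ → ℝ → ℝ} (h0 : F 0 0 = 0)
    (hF : (tsupp F).Nonempty) {t : ℝ} (ht : 0 < t) (htd : 1 ≤ t * newtonDist F)
    {U : Set (ℝ × ℝ)} (hU : U ∈ 𝓝 ((0 : ℝ), (0 : ℝ))) :
    ¬ IntegrableOn (fun p : ℝ × ℝ => vertexFn F p.1 p.2 ^ (-t)) U := by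
  intro hint
  obtain ⟨α, β, hα, hβ, hpos, hline⟩ := exists_supporting_line h0 hF
  obtain ⟨δ', hδ', hball⟩ := Metric.mem_nhds_iff.1 hU
  set δ := min δ' 1 with hδdef
  have hδ : 0 < δ := lt_min hδ' one_pos
  have hδ₁ : δ ≤ 1 := min_le_right _ _
  set n : ℝ := √(finite_vertexSet F).toFinset.card with hn
  have hn₀ : 0 < n := by
    refine Real.sqrt_pos.2 (Nat.cast_pos.2 (Finset.card_pos.2 ?_))
    simpa using vertexSet_nonempty hF
  let ε : ℕ → ℝ := fun k => (1 / 2) ^ k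
  have hε : ∀ k, 0 < ε k := fun k => by positivity
  have hε₁ : ∀ k, ε k ≤ 1 := fun k => pow_le_one₀ (by norm_num) (by norm_num)
  let B : ℕ → Set (ℝ × ℝ) := fun k => Ioo 0 (δ * ε k ^ α) ×ˢ Ioo 0 (δ * ε k ^ β)
  have hBU : ∀ k, B k ⊆ U := by
    intro k p hp
    refine hball ?_
    have hα₁ : ε k ^ α ≤ 1 := Real.rpow_le_one (hε k).le (hε₁ k) hα
    have hβ₁ : ε k ^ β ≤ 1 := Real.rpow_le_one (hε k).le (hε₁ k) hβ
    have h₁ : p.1 < δ' := by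
      have := hp.1.2
      have := min_le_left δ' 1
      nlinarith
    have h₂ : p.2 < δ' := by
      have := hp.2.2
      have := min_le_left δ' 1
      nlinarith
    rw [Metric.mem_ball, Prod.dist_eq, max_lt_iff, Real.dist_eq, Real.dist_eq, sub_zero, sub_zero,
      abs_of_pos hp.1.1, abs_of_pos hp.2.1]
    exact ⟨h₁, h₂⟩
  have hBm : ∀ k, MeasurableSet (B k) := fun k => measurableSet_Ioo.prod measurableSet_Ioo
  have hvol : ∀ k, volume (B k) = ENNReal.ofReal (δ ^ 2 * ε k ^ (α + β)) := by
    intro k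
    have h : 0 ≤ δ * ε k ^ α := mul_nonneg hδ.le (Real.rpow_nonneg (hε k).le _)
    rw [Measure.volume_eq_prod, Measure.prod_prod, Real.volume_Ioo, Real.volume_Ioo, sub_zero,
      sub_zero, ← ENNReal.ofReal_mul h, Real.rpow_add (hε k)]
    ring_nf
  have hεlim : Tendsto ε atTop (𝓝 0) :=
    tendsto_pow_atTop_nhds_zero_of_lt_one (by norm_num) (by norm_num)
  have hlim : Tendsto (fun k => ENNReal.ofReal (δ ^ 2 * ε k ^ (α + β))) atTop (𝓝 0) := by
    have h := (hεlim.rpow_const (p := α + β) (Or.inr hpos.le)).const_mul (δ ^ 2)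
    rw [Real.zero_rpow hpos.ne', mul_zero] at h
    simpa using ENNReal.tendsto_ofReal h
  have hlim' : Tendsto (volume.restrict U ∘ B) atTop (𝓝 0) := by
    refine hlim.congr fun k => ?_
    rw [Function.comp_apply, Measure.restrict_apply (hBm k), inter_eq_left.2 (hBU k), hvol]
  have hzero := tendsto_setLIntegral_zero hint.2.ne hlim'
  have hconst : 0 < n ^ (-t) * δ ^ 2 := by positivity
  obtain ⟨k, hk⟩ := (hzero.eventually_lt_const (ENNReal.ofReal_pos.2 hconst)).exists
  refine absurd hk (not_lt.2 ?_)
  rw [Measure.restrict_restrict (hBm k), inter_eq_left.2 (hBU k)]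
  calc ENNReal.ofReal (n ^ (-t) * δ ^ 2)
      = ENNReal.ofReal (n ^ (-t) * ε k ^ (-(α + β))) * volume (B k) := by
        have h : 0 ≤ n ^ (-t) * ε k ^ (-(α + β)) :=
          mul_nonneg (Real.rpow_nonneg hn₀.le _) (Real.rpow_nonneg (hε k).le _)
        have h' : ε k ^ (-(α + β)) * ε k ^ (α + β) = 1 := by
          rw [← Real.rpow_add (hε k), neg_add_cancel, Real.rpow_zero]
        rw [hvol, ← ENNReal.ofReal_mul h]
        congr 1
        linear_combination (-(n ^ (-t) * δ ^ 2)) * h'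
    _ = ∫⁻ _ in B k, ENNReal.ofReal (n ^ (-t) * ε k ^ (-(α + β))) :=
        (setLIntegral_const _ _).symm
    _ ≤ ∫⁻ p in B k, ‖vertexFn F p.1 p.2 ^ (-t)‖ₑ := by
        refine setLIntegral_mono' (hBm k) fun p hp => ?_
        have hx := hp.1.1
        have hy := hp.2.1
        have hFpos := vertexFn_pos hF hx.ne' hy.ne'
        have hα₀ : 0 ≤ ε k ^ α := Real.rpow_nonneg (hε k).le _
        have hβ₀ : 0 ≤ ε k ^ β := Real.rpow_nonneg (hε k).le _
        have hle := vertexFn_le hline (hε k) (hε₁ k) hx.le hy.le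
          (hp.1.2.le.trans (mul_le_of_le_one_left hα₀ hδ₁))
          (hp.2.2.le.trans (mul_le_of_le_one_left hβ₀ hδ₁))
        rw [Real.enorm_of_nonneg (Real.rpow_nonneg hFpos.le _)]
        refine ENNReal.ofReal_le_ofReal ?_
        refine le_trans ?_ (Real.rpow_le_rpow_of_nonpos hFpos hle (by linarith))
        rw [Real.mul_rpow hn₀.le (Real.rpow_nonneg (hε k).le _), ← Real.rpow_mul (hε k).le]
        refine mul_le_mul_of_nonneg_left ?_ (Real.rpow_nonneg hn₀.le _)
        refine Real.rpow_le_rpow_of_exponent_ge (hε k) (hε₁ k) ?_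
        nlinarith

/-- Varchenko-type integrability: `F*^{-t}` is integrable near the origin iff `t < 1/d(F)`. -/
theorem stmt_12 (F : ℝ → ℝ → ℝ) (U₀ : Set (ℝ × ℝ)) (hU₀ : U₀ ∈ 𝓝 ((0 : ℝ), (0 : ℝ)))
    (hsm : ContDiffOn ℝ (⊤ : ℕ∞) (fun p : ℝ × ℝ => F p.1 p.2) U₀)
    (h0 : F 0 0 = 0) (hgrad : fderiv ℝ (fun p : ℝ × ℝ => F p.1 p.2) (0, 0) = 0)
    (hts : (tsupp F).Nonempty) :
    ∀ t > (0 : ℝ),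
      ((∃ U ∈ 𝓝 ((0 : ℝ), (0 : ℝ)),
          IntegrableOn (fun p : ℝ × ℝ => vertexFn F p.1 p.2 ^ (-t)) U) ↔
        t < 1 / newtonDist F) := by
  intro t ht
  have hd := newtonDist_pos h0 hts
  constructor
  · rintro ⟨U, hU, hint⟩
    by_contra hlt
    rw [not_lt, div_le_iff₀ hd] at hlt
    exact not_integrableOn_vertexFn_rpow h0 hts ht hlt hU hint
  · intro hlt
    have hlt' : newtonDist F < 1 / t := by
      rw [lt_div_iff₀ hd] at hlt
      rw [lt_div_iff₀ ht]
      linarith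
    obtain ⟨d, hdN, hdt⟩ := exists_lt_of_csInf_lt (diagonal_nonempty hts) hlt'
    refine ⟨_, ?_, integrableOn_vertexFn_rpow hts ht hdN ?_⟩
    · exact prod_mem_nhds (Ioo_mem_nhds (by norm_num) (by norm_num))
        (Ioo_mem_nhds (by norm_num) (by norm_num))
    · rw [lt_div_iff₀ ht] at hdt
      linarith

end
end

section
/- Let F be a smooth function on a neighborhood of the origin in ℝ² with nonvanishing Taylor series, let M > 0, α = α_M(F), and C₀ > 0. Then there exist C, δ > 0 such that |∂_y² F(x,y)| ≤ C x^{α − 2M} for all (x,y) with 0 < x < δ and |y| ≤ C₀ x^M. -/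
open MeasureTheory Set Filter Topology

noncomputable section

/-- A smooth function of one variable whose first `n` derivatives vanish at `0`
is `O(|x|^n)` near `0`. -/
lemma eventually_abs_le_pow_of_iteratedDeriv_eq_zero (n : ℕ) :
    ∀ (h : ℝ → ℝ) (W : Set ℝ), IsOpen W → (0 : ℝ) ∈ W → ContDiffOn ℝ (⊤ : ℕ∞) h W →
      (∀ a < n, iteratedDeriv a h 0 = 0) →
      ∃ C ≥ (0 : ℝ), ∀ᶠ x in 𝓝 (0 : ℝ), |h x| ≤ C * |x| ^ n := by
  induction n with
  | zero =>
    intro h W hW h0 hh _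
    have hc : ContinuousAt h 0 := hh.continuousOn.continuousAt (hW.mem_nhds h0)
    refine ⟨|h 0| + 1, by positivity, ?_⟩
    filter_upwards [hc.abs.eventually_lt continuousAt_const (lt_add_one |h 0|)] with x hx
    simpa using hx.le
  | succ n ih =>
    intro h W hW h0 hh hz
    obtain ⟨C, hC, hev⟩ := ih (deriv h) W hW h0
      (hh.deriv_of_isOpen hW (by exact_mod_cast le_top)) (fun a ha => by
        rw [← iteratedDeriv_succ']
        exact hz (a + 1) (by omega))
    refine ⟨C, hC, ?_⟩
    obtain ⟨r, hr, hball⟩ := Metric.eventually_nhds_iff.1 (hev.and (hW.mem_nhds h0))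
    filter_upwards [Metric.ball_mem_nhds (0 : ℝ) hr] with x hx
    have hx' : |x| < r := by simpa using hx
    have key : ∀ t ∈ Icc (-|x|) |x|, |deriv h t| ≤ C * |t| ^ n ∧ t ∈ W := fun t ht =>
      hball (by simpa using (abs_le.2 ht).trans_lt hx')
    have hmv := (convex_Icc (-|x|) |x|).norm_image_sub_le_of_norm_deriv_le (f := h)
      (C := C * |x| ^ n) (x := 0) (y := x)
      (fun t ht => (hh.differentiableOn (by simp)).differentiableAt
        (hW.mem_nhds (key t ht).2))
      (fun t ht => (key t ht).1.trans
        (mul_le_mul_of_nonneg_left (pow_le_pow_left₀ (abs_nonneg t) (abs_le.2 ht) n) hC))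
      ⟨by simp, by simp⟩ (abs_le.1 le_rfl)
    have h00 : h 0 = 0 := by simpa using hz 0 (by omega)
    simpa [h00, pow_succ, mul_assoc] using hmv

/-- The partial derivative in the second variable of a smooth function on an open set is smooth. -/
lemma contDiffOn_deriv_snd_s15 {H : ℝ → ℝ → ℝ} {V : Set (ℝ × ℝ)} (hV : IsOpen V)
    (hH : ContDiffOn ℝ (⊤ : ℕ∞) (fun p : ℝ × ℝ => H p.1 p.2) V) :
    ContDiffOn ℝ (⊤ : ℕ∞) (fun p : ℝ × ℝ => deriv (H p.1) p.2) V := by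
  have hfd := hH.fderiv_of_isOpen (m := ((⊤ : ℕ∞) : WithTop ℕ∞)) hV (by exact_mod_cast le_top)
  refine (hfd.clm_apply (contDiffOn_const (c := ((0 : ℝ), (1 : ℝ))))).congr fun p hp => ?_
  have hd : HasFDerivAt (fun p : ℝ × ℝ => H p.1 p.2) _ (p.1, p.2) :=
    ((hH.differentiableOn (by simp)).differentiableAt (hV.mem_nhds hp)).hasFDerivAt
  exact (hd.comp_hasDerivAt p.2 ((hasDerivAt_const p.2 p.1).prodMk (hasDerivAt_id p.2))).deriv

/-- Taking the derivative in the second variable shifts the Taylor coefficients. -/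
lemma pderiv2_deriv_snd (H : ℝ → ℝ → ℝ) (a b : ℕ) (x y : ℝ) :
    pderiv2 (fun x' y' => deriv (H x') y') a b x y = pderiv2 H a (b + 1) x y := by
  simp only [pderiv2, iteratedDeriv_succ']

/-- The curved region `|y| ≤ C₀ x^M` is eventually contained in any neighborhood of the origin. -/
lemma eventually_mem_of_abs_le_rpow {V : Set (ℝ × ℝ)} (hV : V ∈ 𝓝 ((0 : ℝ), (0 : ℝ)))
    {M : ℝ} (hM : 0 < M) (C₀ : ℝ) :
    ∀ᶠ x in 𝓝[>] (0 : ℝ), ∀ y : ℝ, |y| ≤ C₀ * x ^ M → (x, y) ∈ V := by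
  obtain ⟨r, hr, hball⟩ := Metric.mem_nhds_iff.1 hV
  have hc : ContinuousAt (fun x : ℝ => C₀ * x ^ M) 0 :=
    continuousAt_const.mul (Real.continuousAt_rpow_const 0 M (Or.inr hM.le))
  have hlt : ∀ᶠ x in 𝓝 (0 : ℝ), C₀ * x ^ M < r :=
    hc.eventually_lt continuousAt_const (by simpa [Real.zero_rpow hM.ne'] using hr)
  filter_upwards [nhdsWithin_le_nhds hlt,
    nhdsWithin_le_nhds (Metric.ball_mem_nhds (0 : ℝ) hr)] with x hx hxr y hy
  refine hball ?_
  rw [Metric.mem_ball, Prod.dist_eq, max_lt_iff]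
  exact ⟨hxr, by simpa using hy.trans_lt hx⟩

/-- A smooth function whose Taylor coefficients of `M`-weighted degree less than `β` vanish is
`O(x^β)` on the region `|y| ≤ C₀ x^M`. -/
lemma eventually_abs_le_rpow_of_pderiv2_eq_zero {M : ℝ} (hM : 0 < M) {C₀ : ℝ} (hC₀ : 0 < C₀)
    {V : Set (ℝ × ℝ)} (hV : IsOpen V) (h0 : ((0 : ℝ), (0 : ℝ)) ∈ V) (n : ℕ) :
    ∀ (H : ℝ → ℝ → ℝ) (β : ℝ), β ≤ n * M →
      ContDiffOn ℝ (⊤ : ℕ∞) (fun p : ℝ × ℝ => H p.1 p.2) V →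
      (∀ a b : ℕ, (a : ℝ) + M * b < β → pderiv2 H a b 0 0 = 0) →
      ∃ C ≥ (0 : ℝ), ∀ᶠ x in 𝓝[>] (0 : ℝ), ∀ y : ℝ, |y| ≤ C₀ * x ^ M →
        |H x y| ≤ C * x ^ β := by
  have hlt1 : ∀ᶠ x in 𝓝[>] (0 : ℝ), x < 1 := nhdsWithin_le_nhds (gt_mem_nhds one_pos)
  induction n with
  | zero =>
    intro H β hβ hH _
    have hc : ContinuousAt (fun p : ℝ × ℝ => H p.1 p.2) (0, 0) :=
      hH.continuousOn.continuousAt (hV.mem_nhds h0)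
    have hbd : {p : ℝ × ℝ | |H p.1 p.2| < |H 0 0| + 1} ∈ 𝓝 ((0 : ℝ), (0 : ℝ)) :=
      hc.abs.eventually_lt continuousAt_const (lt_add_one |H 0 0|)
    refine ⟨|H 0 0| + 1, by positivity, ?_⟩
    filter_upwards [eventually_mem_of_abs_le_rpow hbd hM C₀, hlt1, self_mem_nhdsWithin]
      with x hx hx1 hx0 y hy
    have h1 : 1 ≤ x ^ β := Real.one_le_rpow_of_pos_of_le_one_of_nonpos hx0 hx1.le (by simpa using hβ)
    have h2 : |H x y| < |H 0 0| + 1 := hx y hy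
    nlinarith [abs_nonneg (H 0 0)]
  | succ n ih =>
    intro H β hβ hH hz
    obtain ⟨C, hC, hev⟩ := ih (fun x y => deriv (H x) y) (β - M)
      (by push_cast at hβ; linarith) (contDiffOn_deriv_snd_s15 hV hH) (fun a b hab => by
        rw [pderiv2_deriv_snd]
        exact hz a (b + 1) (by push_cast; linarith))
    have hcont : Continuous fun x : ℝ => (x, (0 : ℝ)) := by fun_prop
    obtain ⟨D, hD, hax⟩ := eventually_abs_le_pow_of_iteratedDeriv_eq_zero ⌈β⌉₊
      (fun x => H x 0) ((fun x : ℝ => (x, (0 : ℝ))) ⁻¹' V) (hV.preimage hcont) h0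
      (hH.comp (contDiff_id.prodMk contDiff_const).contDiffOn fun _ hx => hx)
      (fun a ha => by
        simpa [pderiv2] using hz a 0 (by simpa using Nat.lt_ceil.1 ha))
    refine ⟨D + C * C₀, by positivity, ?_⟩
    filter_upwards [hev, nhdsWithin_le_nhds hax, hlt1, self_mem_nhdsWithin,
      eventually_mem_of_abs_le_rpow (hV.mem_nhds h0) hM C₀] with x hx hxa hx1 hx0 hxV y hy
    have hx0 : 0 < x := hx0
    have hys : ∀ t ∈ Icc (-|y|) |y|, |t| ≤ C₀ * x ^ M := fun t ht => (abs_le.2 ht).trans hy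
    have hmv := (convex_Icc (-|y|) |y|).norm_image_sub_le_of_norm_deriv_le (f := H x)
      (C := C * x ^ (β - M)) (x := 0) (y := y)
      (fun t ht => by
        have hd : DifferentiableAt ℝ (fun p : ℝ × ℝ => H p.1 p.2) (x, t) :=
          (hH.differentiableOn (by simp)).differentiableAt (hV.mem_nhds (hxV t (hys t ht)))
        exact hd.comp t (f := fun t : ℝ => (x, t)) (by fun_prop))
      (fun t ht => hx t (hys t ht))
      ⟨by simp, by simp⟩ (abs_le.1 le_rfl)
    have hpow : x ^ ⌈β⌉₊ ≤ x ^ β := by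
      rw [← Real.rpow_natCast]
      exact Real.rpow_le_rpow_of_exponent_ge hx0 hx1.le (Nat.le_ceil β)
    rw [abs_of_pos hx0] at hxa
    simp only [Real.norm_eq_abs, sub_zero] at hmv
    calc |H x y| = |H x 0 + (H x y - H x 0)| := by ring_nf
      _ ≤ |H x 0| + |H x y - H x 0| := abs_add_le _ _
      _ ≤ D * x ^ β + C * x ^ (β - M) * (C₀ * x ^ M) := by
        refine add_le_add (hxa.trans (by gcongr)) (hmv.trans ?_)
        have := Real.rpow_nonneg hx0.le (β - M)
        gcongr
      _ = (D + C * C₀) * x ^ β := by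
        have : x ^ β = x ^ (β - M) * x ^ M := by rw [← Real.rpow_add hx0]; ring_nf
        rw [this]; ring

/-- Derivatives of `M`-weighted order below `α_M` vanish at the origin. -/
lemma pderiv2_eq_zero_of_lt_alphaM {F : ℝ → ℝ → ℝ} {M : ℝ} (hM : 0 < M) {a b : ℕ}
    (hab : (a : ℝ) + M * b < alphaM F M) : pderiv2 F a b 0 0 = 0 := by
  by_contra hne
  have hmem : (a, b) ∈ tsupp F := div_ne_zero hne (by positivity)
  have hbdd : BddBelow {t : ℝ | ∃ p ∈ tsupp F, t = (p.1 : ℝ) + M * p.2} :=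
    ⟨0, by rintro _ ⟨p, -, rfl⟩; positivity⟩
  exact hab.not_ge (csInf_le hbdd ⟨(a, b), hmem, rfl⟩)

/-- On the region `0 < x < δ`, `|y| ≤ C₀ x^M`, one has `|∂_y² F(x,y)| ≤ C x^{α-2M}`. -/
theorem stmt_15 (F : ℝ → ℝ → ℝ) (U₀ : Set (ℝ × ℝ)) (hU₀ : U₀ ∈ 𝓝 ((0 : ℝ), (0 : ℝ)))
    (hsm : ContDiffOn ℝ (⊤ : ℕ∞) (fun p : ℝ × ℝ => F p.1 p.2) U₀)
    (hts : (tsupp F).Nonempty)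
    (M : ℝ) (hM : 0 < M) (C₀ : ℝ) (hC₀ : 0 < C₀) :
    ∃ C > (0 : ℝ), ∃ δ > (0 : ℝ), ∀ x y : ℝ,
      0 < x → x < δ → |y| ≤ C₀ * x ^ M →
      |pderiv2 F 0 2 x y| ≤ C * x ^ (alphaM F M - 2 * M) := by
  obtain ⟨V, hVU, hV, h0⟩ := mem_nhds_iff.1 hU₀
  obtain ⟨n, hn⟩ := exists_nat_ge ((alphaM F M - 2 * M) / M)
  obtain ⟨C, hC, hev⟩ := eventually_abs_le_rpow_of_pderiv2_eq_zero hM hC₀ hV h0 n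
    (fun x y => deriv (fun y' => deriv (F x) y') y) (alphaM F M - 2 * M) ((div_le_iff₀ hM).1 hn)
    (contDiffOn_deriv_snd_s15 (H := fun x y => deriv (F x) y) hV
      (contDiffOn_deriv_snd_s15 hV (hsm.mono hVU)))
    (fun a b hab => by
      rw [pderiv2_deriv_snd (fun x y => deriv (F x) y), pderiv2_deriv_snd]
      exact pderiv2_eq_zero_of_lt_alphaM hM (by push_cast; linarith))
  obtain ⟨δ, hδ, hsub⟩ := mem_nhdsGT_iff_exists_Ioo_subset.1 hev
  refine ⟨C + 1, by linarith, δ, hδ, fun x y hx0 hxδ hy => ?_⟩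
  have hb := hsub ⟨hx0, hxδ⟩ y hy
  have hpos := Real.rpow_nonneg hx0.le (alphaM F M - 2 * M)
  have heq : pderiv2 F 0 2 x y = deriv (fun y' => deriv (F x) y') y := by
    simp [pderiv2, iteratedDeriv_succ]
  rw [heq]
  exact hb.trans (by nlinarith)
end
end
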